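/- arXiv:math/0511730 — 4 statements merged into one kernel-verified Lean document; each statement's English description precedes it below -/
import Mathlib

section
/- The monoid T is finite, and its cardinality satisfies |T| ≤ Σ_{k=0}^{⌊n/2⌋} (n!)² / (2^{2k}·(k!)²·(n−2k)!) (each quotient being an exact natural-number division). -/
/-!
The Brauer monoid presentation from Kudryavtseva–Mazorchuk,
"On presentations of Brauer-type monoids", Section 3.

Generators: `Sum.inl i` represents `σ_{i+1}` and `Sum.inr i` represents `θ_{i+1}`
for `i : Fin (n-1)` (so the paper's indices `1, …, n-1` correspond to `i.val + 1`).
-/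

/-- Generator type: `Sum.inl i` is `σ_{i+1}`, `Sum.inr i` is `θ_{i+1}`. -/
abbrev BrauerGen (n : ℕ) := Fin (n - 1) ⊕ Fin (n - 1)

/-- The word `σ_{i+1}` in the free monoid. -/
def fσ {n : ℕ} (i : Fin (n - 1)) : FreeMonoid (BrauerGen n) := FreeMonoid.of (Sum.inl i)

/-- The word `θ_{i+1}` in the free monoid. -/
def fθ {n : ℕ} (i : Fin (n - 1)) : FreeMonoid (BrauerGen n) := FreeMonoid.of (Sum.inr i)

/-- The defining relations of the presentation of the Brauer monoid `𝔅_n`. -/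
inductive BrauerRel (n : ℕ) : FreeMonoid (BrauerGen n) → FreeMonoid (BrauerGen n) → Prop
  | sigma_sq (i) : BrauerRel n (fσ i * fσ i) 1
  | sigma_comm (i j) (h : 1 < Nat.dist i.1 j.1) : BrauerRel n (fσ i * fσ j) (fσ j * fσ i)
  | braid (i j) (h : Nat.dist i.1 j.1 = 1) :
      BrauerRel n (fσ i * fσ j * fσ i) (fσ j * fσ i * fσ j)
  | theta_idem (i) : BrauerRel n (fθ i * fθ i) (fθ i)
  | theta_comm (i j) (h : 1 < Nat.dist i.1 j.1) : BrauerRel n (fθ i * fθ j) (fθ j * fθ i)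
  | theta_theta_theta (i j) (h : Nat.dist i.1 j.1 = 1) :
      BrauerRel n (fθ i * fθ j * fθ i) (fθ i)
  | theta_sigma (i) : BrauerRel n (fθ i * fσ i) (fθ i)
  | sigma_theta (i) : BrauerRel n (fσ i * fθ i) (fθ i)
  | theta_sigma_comm (i j) (h : 1 < Nat.dist i.1 j.1) :
      BrauerRel n (fθ i * fσ j) (fσ j * fθ i)
  | sigma_theta_theta (i j) (h : Nat.dist i.1 j.1 = 1) :
      BrauerRel n (fσ i * fθ j * fθ i) (fσ j * fθ i)
  | theta_theta_sigma (i j) (h : Nat.dist i.1 j.1 = 1) :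
      BrauerRel n (fθ i * fθ j * fσ i) (fθ i * fσ j)

/-- The monoid `T` given by the presentation above. -/
abbrev BrauerMonoid (n : ℕ) := PresentedMonoid (BrauerRel n)

/-- The generator `σ_{i+1}` of `T`. -/
def σB {n : ℕ} (i : Fin (n - 1)) : BrauerMonoid n := PresentedMonoid.of (BrauerRel n) (Sum.inl i)

/-- The generator `θ_{i+1}` of `T`. -/
def θB {n : ℕ} (i : Fin (n - 1)) : BrauerMonoid n := PresentedMonoid.of (BrauerRel n) (Sum.inr i)

/-- The point `i` of `{1, …, n}` (0-based: `i.val`). -/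
def lo {n : ℕ} (i : Fin (n - 1)) : Fin n := ⟨i.1, by have := i.2; omega⟩

/-- The point `i + 1` of `{1, …, n}` (0-based: `i.val + 1`). -/
def hi {n : ℕ} (i : Fin (n - 1)) : Fin n := ⟨i.1 + 1, by have := i.2; omega⟩

/-- The adjacent transposition `s_{i+1} = (i+1, i+2)` of the symmetric group on `{1, …, n}`. -/
def sPerm {n : ℕ} (i : Fin (n - 1)) : Equiv.Perm (Fin n) := Equiv.swap (lo i) (hi i)

/-!
By the Coxeter relations, the pairs `(σ_i, (i, i + 1))` generate a monoid with at most `n!` elements,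
which is therefore the graph of a homomorphism `φ` from the symmetric group to `T`.
Since `θ_1` commutes with the image of the pointwise stabilizer of `{1, 2}`, its conjugates form a
well-defined family of hooks `Θ a b`, with `Θ i (i + 1) = θ_i`. A product of a hook with a hook
sharing exactly one endpoint is a permutation times the second hook. Hence every element of `T` has
the form `φ g * Θ a₁ b₁ * ⋯ * Θ a_k b_k` with disjoint pairs `{a_i, b_i}`. There are
`n! * (n! / (n - 2k)!)` choices of `g` and of the ordered pairs. Each resulting element arises from
at least `(2^k k!)²` of them: reordering the pairs and the points within a pair does not change the
product of the hooks, and neither does multiplying this product on the left by such a rearrangement.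
-/

open Equiv Equiv.Perm
open scoped Pointwise

section Coxeter

variable {M N : Type*} [Monoid M] [Monoid N] {m : ℕ}

/-- The Coxeter relations of type `A`, satisfied by a family in a monoid. Commutation and braiding
of `σ i` and `σ j` are recorded for `i < j` only. -/
structure IsCoxeterFamily (σ : Fin m → M) : Prop where
  sigma_sq (i : Fin m) : σ i * σ i = 1
  sigma_comm {i j : Fin m} (hij : (i : ℕ) + 1 < j) : σ i * σ j = σ j * σ i
  braid {i j : Fin m} (hij : (i : ℕ) + 1 = j) : σ i * σ j * σ i = σ j * σ i * σ j

/-- The product `σ (m - 1) * ⋯ * σ (p + 1) * σ p`, which is `1` for `p = m`. For the adjacent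
transpositions these are representatives of the right cosets of `S_m` in `S_{m + 1}`. -/
def descendingProd (σ : Fin m → M) : Fin (m + 1) → M :=
  Fin.reverseInduction 1 fun i x ↦ x * σ i

@[simp]
theorem descendingProd_last (σ : Fin m → M) : descendingProd σ (Fin.last m) = 1 := by
  simp [descendingProd]

theorem descendingProd_castSucc (σ : Fin m → M) (i : Fin m) :
    descendingProd σ i.castSucc = descendingProd σ i.succ * σ i := by
  simp [descendingProd]

namespace IsCoxeterFamily

theorem prodMk {σ : Fin m → M} {τ : Fin m → N} (hσ : IsCoxeterFamily σ) (hτ : IsCoxeterFamily τ) :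
    IsCoxeterFamily fun i ↦ (σ i, τ i) where
  sigma_sq i := Prod.ext (hσ.sigma_sq i) (hτ.sigma_sq i)
  sigma_comm hij := Prod.ext (hσ.sigma_comm hij) (hτ.sigma_comm hij)
  braid hij := Prod.ext (hσ.braid hij) (hτ.braid hij)

theorem comp_castSucc {σ : Fin (m + 1) → M} (hσ : IsCoxeterFamily σ) :
    IsCoxeterFamily (σ ∘ Fin.castSucc) where
  sigma_sq i := hσ.sigma_sq i.castSucc
  sigma_comm hij := hσ.sigma_comm hij
  braid hij := hσ.braid hij

theorem descendingProd_mul_of_lt {σ : Fin m → M} (hσ : IsCoxeterFamily σ) {i : Fin m}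
    {p : Fin (m + 1)} (hip : (i : ℕ) + 1 < p) :
    descendingProd σ p * σ i = σ i * descendingProd σ p := by
  induction p using Fin.reverseInduction with
  | last => simp
  | cast q ih =>
    rw [Fin.val_castSucc] at hip
    rw [descendingProd_castSucc, mul_assoc, ← hσ.sigma_comm hip, ← mul_assoc,
      ih (by rw [Fin.val_succ]; lia), mul_assoc]

theorem descendingProd_mul_of_le {σ : Fin m → M} (hσ : IsCoxeterFamily σ) {i j : Fin m}
    (hij : (i : ℕ) + 1 = j) {p : Fin (m + 1)} (hpi : (p : ℕ) ≤ i) :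
    descendingProd σ p * σ j = σ i * descendingProd σ p := by
  induction p using Fin.reverseInduction with
  | last => rw [Fin.val_last] at hpi; lia
  | cast q ih =>
    rw [Fin.val_castSucc] at hpi
    obtain hqi | hqi := hpi.lt_or_eq
    · rw [descendingProd_castSucc, mul_assoc, hσ.sigma_comm (by lia), ← mul_assoc,
        ih (by rw [Fin.val_succ]; lia), mul_assoc]
    · obtain rfl : q = i := Fin.ext hqi
      have hqj : q.succ = j.castSucc := Fin.ext hij
      calc descendingProd σ q.castSucc * σ j
          = descendingProd σ j.succ * (σ j * σ q * σ j) := by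
            rw [descendingProd_castSucc, hqj, descendingProd_castSucc]
            simp only [mul_assoc]
        _ = descendingProd σ j.succ * σ q * σ j * σ q := by
            rw [← hσ.braid hij]
            simp only [mul_assoc]
        _ = σ q * descendingProd σ q.castSucc := by
            rw [hσ.descendingProd_mul_of_lt (by rw [Fin.val_succ]; lia),
              descendingProd_castSucc σ q, hqj, descendingProd_castSucc]
            simp only [mul_assoc]

theorem closure_range_subset_mul {σ : Fin (m + 1) → M} (hσ : IsCoxeterFamily σ) :
    (Submonoid.closure (Set.range σ) : Set M) ⊆
      Submonoid.closure (Set.range (σ ∘ Fin.castSucc)) * Set.range (descendingProd σ) := by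
  intro x hx
  induction hx using Submonoid.closure_induction_right with
  | one => exact ⟨1, one_mem _, 1, ⟨Fin.last _, descendingProd_last σ⟩, mul_one 1⟩
  | mul_right x _ y hy ih =>
    obtain ⟨i, rfl⟩ := hy
    obtain ⟨y, hy, _, ⟨p, rfl⟩, rfl⟩ := ih
    have mem_left (j : Fin m) : σ j.castSucc ∈ Submonoid.closure (Set.range (σ ∘ Fin.castSucc)) :=
      Submonoid.subset_closure ⟨j, rfl⟩
    dsimp only
    rcases lt_trichotomy p i.castSucc with hpi | rfl | hip
    · obtain ⟨j, rfl⟩ := Fin.exists_succ_eq.mpr (show i ≠ 0 by rintro rfl; simp at hpi)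
      have := hσ.descendingProd_mul_of_le (i := j.castSucc) (j := j.succ) (by simp) (p := p)
        (by simpa [Fin.lt_def, Nat.lt_succ_iff] using hpi)
      exact ⟨y * σ j.castSucc, mul_mem hy (mem_left j), _, ⟨p, rfl⟩, by
        simp only [mul_assoc, this]⟩
    · exact ⟨y, hy, _, ⟨i.succ, rfl⟩, by
        simp only [descendingProd_castSucc, mul_assoc, hσ.sigma_sq, mul_one]⟩
    · obtain rfl | hip : p = i.succ ∨ (i : ℕ) + 1 < p := by
        simp only [Fin.lt_def, Fin.val_castSucc, Fin.ext_iff, Fin.val_succ] at hip ⊢; lia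
      · exact ⟨y, hy, _, ⟨i.castSucc, rfl⟩, by simp only [descendingProd_castSucc, mul_assoc]⟩
      · obtain ⟨j, rfl⟩ := Fin.exists_castSucc_eq.mpr
          (show i ≠ Fin.last m by rintro rfl; rw [Fin.val_last] at hip; lia)
        exact ⟨y * σ j.castSucc, mul_mem hy (mem_left j), _, ⟨p, rfl⟩, by
          simp only [mul_assoc, hσ.descendingProd_mul_of_lt hip]⟩

theorem finite_closure_range {σ : Fin m → M} (hσ : IsCoxeterFamily σ) :
    (Submonoid.closure (Set.range σ) : Set M).Finite := by
  induction m with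
  | zero => simp
  | succ m ih =>
    exact ((ih hσ.comp_castSucc).mul (Set.finite_range _)).subset hσ.closure_range_subset_mul

theorem ncard_closure_range_le {σ : Fin m → M} (hσ : IsCoxeterFamily σ) :
    (Submonoid.closure (Set.range σ) : Set M).ncard ≤ (m + 1).factorial := by
  induction m with
  | zero => simp
  | succ m ih =>
    calc (Submonoid.closure (Set.range σ) : Set M).ncard
        ≤ (Submonoid.closure (Set.range (σ ∘ Fin.castSucc)) *
            Set.range (descendingProd σ) : Set M).ncard :=
          Set.ncard_le_ncard hσ.closure_range_subset_mul
            (hσ.comp_castSucc.finite_closure_range.mul (Set.finite_range _))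
      _ ≤ (Submonoid.closure (Set.range (σ ∘ Fin.castSucc)) : Set M).ncard *
            (Set.range (descendingProd σ)).ncard := by
          rw [← Set.image_mul_prod, ← Set.ncard_prod]
          exact Set.ncard_image_le
            (hσ.comp_castSucc.finite_closure_range.prod (Set.finite_range _))
      _ ≤ (m + 1).factorial * (m + 2) := by
          gcongr
          · exact ih hσ.comp_castSucc
          · simpa [← Set.image_univ, Set.ncard_univ] using
              Set.ncard_image_le (f := descendingProd σ) Set.finite_univ
      _ = (m + 2).factorial := by rw [Nat.factorial_succ (m + 1), mul_comm]

end IsCoxeterFamily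

theorem isCoxeterFamily_swap (m : ℕ) :
    IsCoxeterFamily fun i : Fin m ↦ swap i.castSucc i.succ where
  sigma_sq i := swap_mul_self _ _
  sigma_comm {i j} hij := by
    ext x
    simp only [Perm.mul_apply, swap_apply_def]
    grind
  braid {i j} hij := by
    have : i.succ = j.castSucc := Fin.ext hij
    ext x
    simp only [Perm.mul_apply, swap_apply_def]
    grind

/-- The graph of the homomorphism is the submonoid of `M × Perm (Fin (m + 1))` generated by the
pairs `(σ i, (i, i + 1))`. It has at most `(m + 1)!` elements and projects onto the second factor,
so this projection is bijective. -/
theorem IsCoxeterFamily.exists_monoidHom {σ : Fin m → M} (hσ : IsCoxeterFamily σ) :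
    ∃ φ : Perm (Fin (m + 1)) →* M, ∀ i : Fin m, φ (swap i.castSucc i.succ) = σ i := by
  let γ : Fin m → M × Perm (Fin (m + 1)) := fun i ↦ (σ i, swap i.castSucc i.succ)
  have hγ : IsCoxeterFamily γ := hσ.prodMk (isCoxeterFamily_swap m)
  let graph : Submonoid (M × Perm (Fin (m + 1))) := Submonoid.closure (Set.range γ)
  let π : graph →* Perm (Fin (m + 1)) := (MonoidHom.snd _ _).comp graph.subtype
  have : Finite graph := hγ.finite_closure_range
  have π_surjective : Function.Surjective π := by
    rw [← MonoidHom.mrange_eq_top, MonoidHom.mrange_comp, Submonoid.mrange_subtype,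
      MonoidHom.map_mclosure, ← Set.range_comp]
    exact mclosure_swap_castSucc_succ m
  have π_bijective : Function.Bijective π := by
    refine π_surjective.bijective_of_nat_card_le ?_
    rw [Nat.card_perm, Nat.card_fin]
    exact hγ.ncard_closure_range_le
  let e := MulEquiv.ofBijective π π_bijective
  refine ⟨((MonoidHom.fst _ _).comp graph.subtype).comp e.symm.toMonoidHom, fun i ↦ ?_⟩
  have : e.symm (swap i.castSucc i.succ) = ⟨γ i, Submonoid.subset_closure ⟨i, rfl⟩⟩ :=
    e.symm_apply_eq.mpr rfl
  simp [this, γ]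

end Coxeter

section Permutations

variable {α β ι : Type*}

theorem viaEmbedding_swap [DecidableEq α] [DecidableEq β] (e : α ↪ β) (a b : α) :
    (swap a b).viaEmbedding e = swap (e a) (e b) := by
  ext x
  by_cases hx : x ∈ Set.range e
  · obtain ⟨x, rfl⟩ := hx
    rw [viaEmbedding_apply, e.injective.map_swap]
  · rw [viaEmbedding_apply_of_notMem _ _ _ hx, swap_apply_of_ne_of_ne]
    · exact fun h ↦ hx ⟨a, h.symm⟩
    · exact fun h ↦ hx ⟨b, h.symm⟩

theorem exists_viaEmbedding_eq (e : α ↪ β) {g : Perm β} (hg : ∀ x ∉ Set.range e, g x = x) :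
    ∃ w : Perm α, w.viaEmbedding e = g := by
  classical
  have mem_range_iff (x : β) : g x ∈ Set.range e ↔ x ∈ Set.range e := by
    by_cases hx : x ∈ Set.range e
    · exact iff_of_true (by_contra fun h ↦ h (by rwa [g.injective (hg _ h)])) hx
    · rw [hg x hx]
  refine ⟨(ofInjective e e.injective).permCongr.symm (g.subtypePerm mem_range_iff), ?_⟩
  ext x
  by_cases hx : x ∈ Set.range e
  · obtain ⟨x, rfl⟩ := hx
    simp [viaEmbedding_apply, apply_ofInjective_symm]
  · rw [viaEmbedding_apply_of_notMem _ _ _ hx, hg x hx]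

/-- The permutations `prodShear π f` form the hyperoctahedral group. -/
theorem prodShear_mem_of_flip_mem_of_exchange_mem [Finite ι] [DecidableEq ι]
    {W : Subgroup (Perm (ι × Bool))}
    (flip_mem : ∀ i, swap (i, false) (i, true) ∈ W)
    (exchange_mem : ∀ i j, i ≠ j →
      swap (i, false) (j, false) * swap (i, true) (j, true) ∈ W)
    (π : Perm ι) (f : ι → Perm Bool) : prodShear π f ∈ W := by
  have exchanges_mem (π : Perm ι) : prodShear π (fun _ ↦ (1 : Perm Bool)) ∈ W := by
    induction π using swap_induction_on with
    | one => exact W.one_mem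
    | swap_mul π i j hij ih =>
      have : prodShear (swap i j * π) (fun _ ↦ (1 : Perm Bool)) =
          swap (i, false) (j, false) * swap (i, true) (j, true) *
            prodShear π (fun _ ↦ (1 : Perm Bool)) := by
        ext ⟨l, b⟩ <;> cases b <;> simp [swap_apply_def] <;> grind
      rw [this]
      exact W.mul_mem (exchange_mem i j hij) ih
  have flips_mem : prodShear (1 : Perm ι) f ∈ W := by
    let flips : (ι → Perm Bool) →* Perm (ι × Bool) :=
      MonoidHom.mk' (prodShear (1 : Perm ι)) fun _ _ ↦ rfl
    suffices f ∈ W.comap flips from this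
    refine Subgroup.pi_mem_of_mulSingle_mem f fun i ↦ ?_
    obtain hfi | hfi : f i = 1 ∨ f i = swap false true := by
      generalize f i = q; revert q; decide
    · rw [hfi, Pi.mulSingle_one]
      exact Subgroup.one_mem _
    · have : flips (Pi.mulSingle i (swap false true)) = swap (i, false) (i, true) := by
        change prodShear (1 : Perm ι) (Pi.mulSingle i (swap false true)) = _
        ext ⟨l, b⟩ <;> by_cases hl : l = i <;> cases b <;>
          simp [hl, swap_apply_def]
      rw [hfi, Subgroup.mem_comap, this]
      exact flip_mem i
  have : prodShear π f = prodShear π (fun _ ↦ (1 : Perm Bool)) * prodShear (1 : Perm ι) f := rfl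
  rw [this]
  exact W.mul_mem (exchanges_mem π) flips_mem

theorem prodShear_injective : Function.Injective fun w : Perm ι × (ι → Perm Bool) ↦
    (prodShear w.1 w.2 : Perm (ι × Bool)) := by
  rintro ⟨π, f⟩ ⟨ρ, g⟩ h
  have apply_eq (i : ι) (b : Bool) : (π i, f i b) = (ρ i, g i b) := Equiv.congr_fun h (i, b)
  refine Prod.ext (Equiv.ext fun i ↦ ?_) (funext fun i ↦ Equiv.ext fun b ↦ ?_)
  · exact congrArg Prod.fst (apply_eq i false)
  · exact congrArg Prod.snd (apply_eq i b)

end Permutations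

section Conjugation

variable {G M : Type*} [Group G] [Monoid M]

/-- The action of `G` by conjugation on a monoid `M` to which it maps. -/
def conjHom (φ : G →* M) : G →* MulAut M :=
  (MulDistribMulAction.toMulAut (ConjAct Mˣ) M).comp
    (ConjAct.toConjAct.toMonoidHom.comp φ.toHomUnits)

variable (φ : G →* M)

theorem conjHom_apply (g : G) (x : M) : conjHom φ g x = φ g * x * φ g⁻¹ := rfl

theorem conjHom_map (g h : G) : conjHom φ g (φ h) = φ (g * h * g⁻¹) := by
  simp only [conjHom_apply, map_mul]

theorem conjHom_mul_map (g : G) (x : M) : conjHom φ g x * φ g = φ g * x := by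
  rw [conjHom_apply, mul_assoc, ← map_mul, inv_mul_cancel, map_one, mul_one]

theorem conjHom_eq_self {φ : G →* M} {g : G} {x : M} (h : Commute (φ g) x) :
    conjHom φ g x = x := by
  rw [conjHom_apply, h.eq, mul_assoc, ← map_mul, mul_inv_cancel, map_one, mul_one]

/-- The stabilizer of `x` under left multiplication by the image of `G`. -/
def leftStabilizer (x : M) : Subgroup G :=
  letI := MulAction.compHom M φ
  MulAction.stabilizer G x

variable {φ}

theorem mem_leftStabilizer {x : M} {g : G} : g ∈ leftStabilizer φ x ↔ φ g * x = x := Iff.rfl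

theorem mem_leftStabilizer_of_mul_eq {x y : M} {g : G} (hg : g ∈ leftStabilizer φ x)
    (hxy : x * y = y) : g ∈ leftStabilizer φ y := by
  rw [mem_leftStabilizer] at hg ⊢
  rw [← hxy, ← mul_assoc, hg]

end Conjugation

section HookSystem

theorem card_mul_ncard_range_le {ι X Y : Type*} [Finite X] {F : X → Y} (t : ι → X → X)
    (t_injective : ∀ x, Function.Injective (t · x)) (apply_t : ∀ i x, F (t i x) = F x) :
    Nat.card ι * (Set.range F).ncard ≤ Nat.card X := by
  rw [← Nat.card_coe_set_eq, ← Nat.card_prod]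
  choose s hs using fun y : Set.range F ↦ y.2
  refine Nat.card_le_card_of_injective (fun p : ι × Set.range F ↦ t p.1 (s p.2)) ?_
  rintro ⟨i, y⟩ ⟨j, z⟩ h
  obtain rfl : y = z := by
    simpa only [apply_t, hs, Subtype.ext_iff] using congrArg F h
  exact congrArg (·, y) (t_injective _ h)

theorem mul_list_prod_eq_of_mem {M : Type*} [Monoid M] {l : List M} (hl : l.Pairwise Commute)
    {x : M} (hx : IsIdempotentElem x) (hxl : x ∈ l) : x * l.prod = l.prod := by
  classical
  rw [← List.Perm.prod_eq' (List.perm_cons_erase hxl).symm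
    (hl.perm (List.perm_cons_erase hxl) Commute.symm), List.prod_cons, ← mul_assoc, hx.eq]

variable {α M : Type*} [Monoid M]

/-- The product of the hooks `Θ` over the `k` disjoint pairs `e (i, false)`, `e (i, true)`. -/
def hookProd (Θ : α → α → M) {k : ℕ} (e : Fin k × Bool ↪ α) : M :=
  (List.ofFn fun i ↦ Θ (e (i, false)) (e (i, true))).prod

/-- The elements that are a permutation times a product of `k` disjoint hooks. For diagrams these
are the ones with `k` hooks on either side. -/
def hookLayer (φ : Perm α →* M) (Θ : α → α → M) (k : ℕ) : Set M :=
  Set.range fun p : Perm α × (Fin k × Bool ↪ α) ↦ φ p.1 * hookProd Θ p.2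

theorem one_mem_hookLayer_zero (φ : Perm α →* M) (Θ : α → α → M) : 1 ∈ hookLayer φ Θ 0 :=
  ⟨(1, .ofIsEmpty), by simp [hookProd]⟩

theorem hookProd_mem_hookLayer (φ : Perm α →* M) (Θ : α → α → M) {k : ℕ} (e : Fin k × Bool ↪ α) :
    hookProd Θ e ∈ hookLayer φ Θ k :=
  ⟨(1, e), by simp only [map_one, one_mul]⟩

theorem map_mul_mem_hookLayer {φ : Perm α →* M} {Θ : α → α → M} {k : ℕ} {x : M}
    (hx : x ∈ hookLayer φ Θ k) (g : Perm α) : φ g * x ∈ hookLayer φ Θ k := by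
  obtain ⟨⟨g', e⟩, rfl⟩ := hx
  exact ⟨(g * g', e), by simp only [map_mul, mul_assoc]⟩

theorem two_mul_le_card_of_mem_hookLayer [Fintype α] {φ : Perm α →* M} {Θ : α → α → M} {k : ℕ}
    {x : M} (hx : x ∈ hookLayer φ Θ k) : 2 * k ≤ Fintype.card α := by
  obtain ⟨⟨_, e⟩, -⟩ := hx
  simpa [mul_comm] using Fintype.card_le_of_embedding e

theorem mul_hookProd_mem_hookLayer_succ (φ : Perm α →* M) (Θ : α → α → M) {k : ℕ}
    {e : Fin k × Bool ↪ α} {a b : α} (hab : a ≠ b) (ha : a ∉ Set.range e)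
    (hb : b ∉ Set.range e) : Θ a b * hookProd Θ e ∈ hookLayer φ Θ (k + 1) := by
  let f : Fin (k + 1) → Bool → α := Fin.cons (fun c ↦ cond c b a) fun i c ↦ e (i, c)
  have f_injective : Function.Injective f.uncurry := by
    rintro ⟨i, c⟩ ⟨j, d⟩ hij
    induction i using Fin.cases <;> induction j using Fin.cases <;> cases c <;> cases d <;>
      simp_all [f, eq_comm]
  exact ⟨(1, ⟨_, f_injective⟩), by simp [hookProd, f, List.ofFn_succ]⟩

variable [DecidableEq α]

/-- A family indexed by the pairs of distinct points of `α` is equivariant for the natural action of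
`Perm α` on pairs and its action on `M` by conjugation. Nothing is required on the diagonal. -/
def IsConjEquivariant (φ : Perm α →* M) (Θ : α → α → M) : Prop :=
  ∀ (g : Perm α) ⦃a b : α⦄, a ≠ b → conjHom φ g (Θ a b) = Θ (g a) (g b)

/-- A family of elements `Θ a b` of a monoid, indexed by the pairs of distinct points of `α`, which
multiply among themselves and with the permutations of `α` like the Brauer diagrams whose only
horizontal lines are two hooks joining `a` and `b`. -/
structure IsHookSystem (φ : Perm α →* M) (Θ : α → α → M) : Prop where
  conj : IsConjEquivariant φ Θ
  symm {a b : α} (hab : a ≠ b) : Θ a b = Θ b a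
  idem {a b : α} (hab : a ≠ b) : IsIdempotentElem (Θ a b)
  swap_mul {a b : α} (hab : a ≠ b) : φ (swap a b) * Θ a b = Θ a b
  comm {a b c d : α} (h : [a, b, c, d].Nodup) : Commute (Θ a b) (Θ c d)
  chain {a b c : α} (h : [a, b, c].Nodup) : Θ b c * Θ a b = φ (swap a b * swap b c) * Θ a b

namespace IsHookSystem

variable {φ : Perm α →* M} {Θ : α → α → M} (h : IsHookSystem φ Θ) {k : ℕ} (e : Fin k × Bool ↪ α)
include h

theorem mul_map {a b : α} (hab : a ≠ b) (g : Perm α) :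
    Θ a b * φ g = φ g * Θ (g⁻¹ a) (g⁻¹ b) := by
  rw [← conjHom_mul_map, h.conj g (by simpa using hab)]
  simp

theorem pairwise_commute :
    (List.ofFn fun i ↦ Θ (e (i, false)) (e (i, true))).Pairwise Commute :=
  List.pairwise_ofFn.mpr fun _ _ hij ↦ h.comm (by simp [hij.ne])

theorem mul_hookProd (i : Fin k) :
    Θ (e (i, false)) (e (i, true)) * hookProd Θ e = hookProd Θ e :=
  mul_list_prod_eq_of_mem (h.pairwise_commute e) (h.idem (by simp)) (List.mem_ofFn.mpr ⟨i, rfl⟩)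

theorem hookProd_prodShear (π : Perm (Fin k)) (f : Fin k → Perm Bool) :
    hookProd Θ ((prodShear π f).toEmbedding.trans e) = hookProd Θ e := by
  have flip_eq (i : Fin k) (q : Perm Bool) :
      Θ (e (i, q false)) (e (i, q true)) = Θ (e (i, false)) (e (i, true)) := by
    obtain rfl | rfl : q = 1 ∨ q = swap false true := by revert q; decide
    · rfl
    · exact h.symm (by simp)
  have : (fun i ↦ Θ (e (prodShear π f (i, false))) (e (prodShear π f (i, true)))) =
      (fun i ↦ Θ (e (i, false)) (e (i, true))) ∘ π :=
    funext fun i ↦ flip_eq (π i) (f i)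
  refine List.Perm.prod_eq' ?_ (h.pairwise_commute _)
  exact .trans (.of_eq (congrArg List.ofFn this)) (π.ofFn_comp_perm _)

/-- The product `Θ b c * Θ a b * Θ c d` is evaluated in two ways, starting from either neighbour of
`Θ b c`. -/
theorem exchange_mul {a b c d : α} (habcd : [a, b, c, d].Nodup) :
    φ (swap a c * swap b d) * (Θ a b * Θ c d) = Θ a b * Θ c d := by
  have hcomm : Θ a b * Θ c d = Θ c d * Θ a b := h.comm habcd
  simp only [List.nodup_cons, List.mem_cons, List.not_mem_nil, not_or, or_false] at habcd
  have via_left : Θ b c * (Θ a b * Θ c d) = φ (swap a b * swap b c) * (Θ a b * Θ c d) := by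
    rw [← mul_assoc, h.chain (by simp; tauto), mul_assoc]
  have via_right : Θ b c * (Θ a b * Θ c d) = φ (swap d c * swap c b) * (Θ a b * Θ c d) := by
    have := h.chain (a := d) (b := c) (c := b) (by simp; tauto)
    rw [h.symm (a := c) (b := b) (by tauto), h.symm (a := d) (b := c) (by tauto)] at this
    rw [hcomm, ← mul_assoc, this, mul_assoc]
  have factor : swap a c * swap b d = (swap a b * swap b c)⁻¹ * (swap d c * swap c b) := by
    rw [mul_inv_rev, swap_inv, swap_inv]
    ext x
    simp only [Perm.mul_apply, swap_apply_def]
    grind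
  rw [factor, map_mul, mul_assoc, ← via_right, via_left, ← mul_assoc, ← map_mul, inv_mul_cancel,
    map_one, one_mul]

theorem viaEmbedding_prodShear_mem_leftStabilizer (π : Perm (Fin k)) (f : Fin k → Perm Bool) :
    viaEmbedding (prodShear π f) e ∈ leftStabilizer φ (hookProd Θ e) := by
  suffices prodShear π f ∈ (leftStabilizer φ (hookProd Θ e)).comap (viaEmbeddingHom e) from this
  refine prodShear_mem_of_flip_mem_of_exchange_mem (fun i ↦ ?_) (fun i j hij ↦ ?_) π f
  · rw [Subgroup.mem_comap, viaEmbeddingHom_apply, viaEmbedding_swap]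
    exact mem_leftStabilizer_of_mul_eq (h.swap_mul (by simp)) (h.mul_hookProd e i)
  · rw [Subgroup.mem_comap, map_mul, viaEmbeddingHom_apply, viaEmbeddingHom_apply,
      viaEmbedding_swap, viaEmbedding_swap]
    refine mem_leftStabilizer_of_mul_eq (h.exchange_mul (by simp [hij])) ?_
    rw [mul_assoc, h.mul_hookProd, h.mul_hookProd]

theorem mul_hookProd_mem_hookLayer {x : Fin k × Bool} {b : α} (hb : e x ≠ b) :
    Θ (e x) b * hookProd Θ e ∈ hookLayer φ Θ k := by
  obtain ⟨i, c⟩ := x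
  have hne : e (i, !c) ≠ e (i, c) := by simp
  have absorb : Θ (e (i, !c)) (e (i, c)) * hookProd Θ e = hookProd Θ e := by
    cases c
    · rw [h.symm hne]
      exact h.mul_hookProd e i
    · exact h.mul_hookProd e i
  obtain rfl | hpb := eq_or_ne (e (i, !c)) b
  · rw [h.symm hb, absorb]
    exact hookProd_mem_hookLayer φ Θ e
  · have turn : Θ (e (i, c)) b * hookProd Θ e =
        φ (swap (e (i, !c)) (e (i, c)) * swap (e (i, c)) b) * hookProd Θ e := by
      rw [← absorb, ← mul_assoc, h.chain (by simp [hb, hpb]), mul_assoc]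
    rw [turn]
    exact map_mul_mem_hookLayer (hookProd_mem_hookLayer φ Θ e) _

theorem mul_mem_iUnion_hookLayer {a b : α} (hab : a ≠ b) {x : M}
    (hx : x ∈ ⋃ k, hookLayer φ Θ k) : Θ a b * x ∈ ⋃ k, hookLayer φ Θ k := by
  simp only [Set.mem_iUnion] at hx ⊢
  obtain ⟨k, ⟨g, e⟩, rfl⟩ := hx
  suffices ∃ l, Θ (g⁻¹ a) (g⁻¹ b) * hookProd Θ e ∈ hookLayer φ Θ l by
    obtain ⟨l, hl⟩ := this
    refine ⟨l, ?_⟩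
    rw [← mul_assoc, h.mul_map hab, mul_assoc]
    exact map_mul_mem_hookLayer hl g
  have hab : g⁻¹ a ≠ g⁻¹ b := by simpa using hab
  by_cases ha : g⁻¹ a ∈ Set.range e
  · obtain ⟨x, hx⟩ := ha
    rw [← hx] at hab ⊢
    exact ⟨k, h.mul_hookProd_mem_hookLayer e hab⟩
  by_cases hb : g⁻¹ b ∈ Set.range e
  · obtain ⟨x, hx⟩ := hb
    rw [h.symm hab, ← hx]
    exact ⟨k, h.mul_hookProd_mem_hookLayer e (hx ▸ hab.symm)⟩
  · exact ⟨k + 1, mul_hookProd_mem_hookLayer_succ φ Θ hab ha hb⟩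

theorem iUnion_hookLayer_eq_univ
    (closure_eq_top : Submonoid.closure (Set.range φ ∪ {x | ∃ a b, a ≠ b ∧ Θ a b = x}) = ⊤) :
    ⋃ k, hookLayer φ Θ k = Set.univ := by
  refine Set.eq_univ_of_forall fun x ↦ ?_
  have hx : x ∈ Submonoid.closure (Set.range φ ∪ {x | ∃ a b, a ≠ b ∧ Θ a b = x}) :=
    closure_eq_top ▸ Submonoid.mem_top x
  induction hx using Submonoid.closure_induction_left with
  | one => exact Set.mem_iUnion_of_mem 0 (one_mem_hookLayer_zero φ Θ)
  | mul_left y hy x _ ih =>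
    obtain ⟨g, rfl⟩ | ⟨a, b, hab, rfl⟩ := hy
    · obtain ⟨k, hk⟩ := Set.mem_iUnion.mp ih
      exact Set.mem_iUnion_of_mem k (map_mul_mem_hookLayer hk g)
    · exact h.mul_mem_iUnion_hookLayer hab ih

/-- The hyperoctahedral group acts on `e`, and by multiplication with its image under `e` also on
`g`; neither action changes `φ g * hookProd Θ e`. -/
theorem card_mul_ncard_hookLayer_le [Fintype α] (k : ℕ) :
    (2 ^ k * k.factorial) ^ 2 * (hookLayer φ Θ k).ncard ≤
      (Fintype.card α).factorial * (Fintype.card α).descFactorial (2 * k) := by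
  let W := Perm (Fin k) × (Fin k → Perm Bool)
  let shear (w : W) : Perm (Fin k × Bool) := prodShear w.1 w.2
  have card_W : Nat.card W = 2 ^ k * k.factorial := by
    simp [W, Fintype.card_perm, mul_comm]
  have card_pairs : Nat.card (Perm α × (Fin k × Bool ↪ α)) =
      (Fintype.card α).factorial * (Fintype.card α).descFactorial (2 * k) := by
    simp [Fintype.card_perm, Fintype.card_embedding_eq, mul_comm]
  rw [← card_W, ← card_pairs, sq, ← Nat.card_prod]
  refine card_mul_ncard_range_le
    (fun (w : W × W) p ↦ (p.1 * (shear w.1).viaEmbedding p.2, (shear w.2).toEmbedding.trans p.2))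
    ?_ ?_
  · rintro ⟨g, e⟩ ⟨v, v'⟩ ⟨w, w'⟩ hvw
    simp only [Prod.mk.injEq, mul_right_inj] at hvw
    refine Prod.ext (prodShear_injective (viaEmbeddingHom_injective e hvw.1))
      (prodShear_injective (Equiv.ext fun x ↦ e.injective (DFunLike.congr_fun hvw.2 x)))
  · rintro ⟨v, w⟩ ⟨g, e⟩
    dsimp only
    rw [h.hookProd_prodShear, map_mul, mul_assoc, mem_leftStabilizer.mp
      (h.viaEmbedding_prodShear_mem_leftStabilizer e _ _)]

theorem ncard_hookLayer_le [Fintype α] (hk : 2 * k ≤ Fintype.card α) :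
    (hookLayer φ Θ k).ncard ≤ (Fintype.card α).factorial ^ 2 /
      (2 ^ (2 * k) * k.factorial ^ 2 * (Fintype.card α - 2 * k).factorial) := by
  rw [Nat.le_div_iff_mul_le (by positivity)]
  calc (hookLayer φ Θ k).ncard *
        (2 ^ (2 * k) * k.factorial ^ 2 * (Fintype.card α - 2 * k).factorial)
      = (2 ^ k * k.factorial) ^ 2 * (hookLayer φ Θ k).ncard *
          (Fintype.card α - 2 * k).factorial := by ring
    _ ≤ (Fintype.card α).factorial * (Fintype.card α).descFactorial (2 * k) *
          (Fintype.card α - 2 * k).factorial :=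
        Nat.mul_le_mul_right _ (h.card_mul_ncard_hookLayer_le k)
    _ = (Fintype.card α).factorial ^ 2 := by
        rw [mul_assoc, mul_comm (Nat.descFactorial _ _), Nat.factorial_mul_descFactorial hk, sq]

theorem finite_and_card_le [Fintype α]
    (closure_eq_top : Submonoid.closure (Set.range φ ∪ {x | ∃ a b, a ≠ b ∧ Θ a b = x}) = ⊤) :
    Finite M ∧ Nat.card M ≤ ∑ k ∈ Finset.range (Fintype.card α / 2 + 1),
      (Fintype.card α).factorial ^ 2 /
        (2 ^ (2 * k) * k.factorial ^ 2 * (Fintype.card α - 2 * k).factorial) := by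
  have union_eq :
      ⋃ k ∈ Finset.range (Fintype.card α / 2 + 1), hookLayer φ Θ k = Set.univ := by
    refine Set.eq_univ_of_forall fun x ↦ ?_
    obtain ⟨k, hk⟩ := Set.mem_iUnion.mp
      ((h.iUnion_hookLayer_eq_univ closure_eq_top).symm ▸ Set.mem_univ x)
    have := two_mul_le_card_of_mem_hookLayer hk
    exact Set.mem_biUnion (Finset.mem_range.mpr (by lia)) hk
  constructor
  · rw [← Set.finite_univ_iff, ← union_eq]
    exact Finset.finite_toSet _ |>.biUnion fun k _ ↦ Set.finite_range _
  · rw [← Set.ncard_univ, ← union_eq]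
    refine (Finset.set_ncard_biUnion_le _ _).trans (Finset.sum_le_sum fun k hk ↦ ?_)
    rw [Finset.mem_range] at hk
    exact h.ncard_hookLayer_le (by lia)

end IsHookSystem

end HookSystem

section Equivariance

theorem exists_perm_map_eq {α : Type*} {l l' : List α} (hl : l.Nodup) (hl' : l'.Nodup)
    (hlength : l.length = l'.length) : ∃ g : Perm α, l.map g = l' := by
  obtain ⟨g, hg⟩ := exists_extending_pair l.get (l'.get ∘ Fin.cast hlength)
    (List.nodup_iff_injective_get.mp hl)
    ((List.nodup_iff_injective_get.mp hl').comp (Fin.cast_injective hlength))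
  exact ⟨g, List.ext_get (by simpa using hlength) fun i hi _ ↦ by
    simpa using hg ⟨i, by simpa using hi⟩⟩

variable {α M : Type*} [Monoid M] {φ : Perm α →* M}

theorem exists_isConjEquivariant {p q : α} (hpq : p ≠ q) {x : M}
    (commute : ∀ g : Perm α, g p = p → g q = q → Commute (φ g) x) :
    ∃ Θ : α → α → M, IsConjEquivariant φ Θ ∧ Θ p q = x := by
  let Θ : α × α → M := Function.extend (fun g : Perm α ↦ (g p, g q)) (fun g ↦ conjHom φ g x) 1
  have factorsThrough : Function.FactorsThrough (fun g : Perm α ↦ conjHom φ g x)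
      (fun g : Perm α ↦ (g p, g q)) := by
    intro g h hgh
    obtain ⟨hp, hq⟩ := Prod.mk.inj hgh
    have : Commute (φ (h⁻¹ * g)) x := commute _ (by simp [hp]) (by simp [hq])
    dsimp only
    rw [← mul_inv_cancel_left h g, map_mul, MulAut.mul_apply, conjHom_eq_self this]
  have Θ_apply (g : Perm α) : Θ (g p, g q) = conjHom φ g x := factorsThrough.extend_apply 1 g
  refine ⟨fun a b ↦ Θ (a, b), fun g a b hab ↦ ?_, by simpa using Θ_apply 1⟩
  obtain ⟨h, hh⟩ := exists_perm_map_eq (l := [p, q]) (l' := [a, b])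
    (by simpa using hpq) (by simpa using hab) rfl
  obtain ⟨rfl, rfl⟩ : h p = a ∧ h q = b := by simpa using hh
  change conjHom φ g (Θ (h p, h q)) = Θ ((g * h) p, (g * h) q)
  rw [Θ_apply, Θ_apply, map_mul, MulAut.mul_apply]

namespace IsConjEquivariant

variable {Θ : α → α → M} (hΘ : IsConjEquivariant φ Θ)
include hΘ

theorem exists_conjHom_eq [DecidableEq α] {a b a' b' : α} (hab : a ≠ b) (hab' : a' ≠ b') :
    ∃ g : Perm α, Θ a' b' = conjHom φ g (Θ a b) ∧ φ (swap a' b') = conjHom φ g (φ (swap a b)) := by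
  obtain ⟨g, hg⟩ := exists_perm_map_eq (l := [a, b]) (l' := [a', b'])
    (by simpa using hab) (by simpa using hab') rfl
  obtain ⟨rfl, rfl⟩ : g a = a' ∧ g b = b' := by simpa using hg
  exact ⟨g, (hΘ g hab).symm, by rw [swap_apply_apply, conjHom_map]⟩

theorem symm_of_commute [DecidableEq α] {a b : α} (hab : a ≠ b)
    (h : Commute (φ (swap a b)) (Θ a b)) : Θ a b = Θ b a := by
  rw [← conjHom_eq_self h, hΘ _ hab, swap_apply_left, swap_apply_right]

theorem commute_of_commute {a b c d a' b' c' d' : α} (h : [a, b, c, d].Nodup)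
    (h' : [a', b', c', d'].Nodup) (hcomm : Commute (Θ a b) (Θ c d)) :
    Commute (Θ a' b') (Θ c' d') := by
  obtain ⟨g, hg⟩ := exists_perm_map_eq h h' rfl
  simp only [List.map_cons, List.map_nil, List.cons.injEq, and_true] at hg
  obtain ⟨rfl, rfl, rfl, rfl⟩ := hg
  rw [← hΘ g (by grind), ← hΘ g (by grind)]
  exact hcomm.map _

theorem chain_of_chain [DecidableEq α] {a b c a' b' c' : α} (h : [a, b, c].Nodup)
    (h' : [a', b', c'].Nodup) (hchain : Θ b c * Θ a b = φ (swap a b * swap b c) * Θ a b) :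
    Θ b' c' * Θ a' b' = φ (swap a' b' * swap b' c') * Θ a' b' := by
  obtain ⟨g, hg⟩ := exists_perm_map_eq h h' rfl
  simp only [List.map_cons, List.map_nil, List.cons.injEq, and_true] at hg
  obtain ⟨rfl, rfl, rfl⟩ := hg
  have := congrArg (conjHom φ g) hchain
  rwa [map_mul, map_mul, conjHom_map, hΘ g (by grind), hΘ g (by grind), ← conj_mul,
    ← swap_apply_apply, ← swap_apply_apply] at this

end IsConjEquivariant

end Equivariance

section BrauerFamily

variable {M : Type*} [Monoid M] {m : ℕ}

/-- The relations between the standard generators of the Brauer monoid, satisfied by two families in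
a monoid. Relations between generators with distinct indices are recorded in one order only. -/
structure IsBrauerFamily (σ θ : Fin m → M) : Prop extends IsCoxeterFamily σ where
  theta_idem (i : Fin m) : θ i * θ i = θ i
  theta_sigma (i : Fin m) : θ i * σ i = θ i
  sigma_theta (i : Fin m) : σ i * θ i = θ i
  theta_comm {i j : Fin m} (hij : (i : ℕ) + 1 < j) : θ i * θ j = θ j * θ i
  theta_sigma_comm {i j : Fin m} (hij : (i : ℕ) + 1 < j) : θ i * σ j = σ j * θ i
  theta_theta_theta {i j : Fin m} (hij : (i : ℕ) + 1 = j) : θ j * θ i * θ j = θ j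
  sigma_theta_theta {i j : Fin m} (hij : (i : ℕ) + 1 = j) : σ i * θ j * θ i = σ j * θ i
  theta_theta_sigma {i j : Fin m} (hij : (i : ℕ) + 1 = j) : θ i * θ j * σ i = θ i * σ j

namespace IsBrauerFamily

theorem theta_mul_theta {σ θ : Fin m → M} (h : IsBrauerFamily σ θ) {i j : Fin m}
    (hij : (i : ℕ) + 1 = j) : θ j * θ i = σ i * σ j * θ i := by
  rw [mul_assoc, ← h.sigma_theta_theta hij, ← mul_assoc, ← mul_assoc, h.sigma_sq, one_mul]

theorem theta_eq_conj {σ θ : Fin m → M} (h : IsBrauerFamily σ θ) {i j : Fin m}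
    (hij : (i : ℕ) + 1 = j) : θ j = σ i * σ j * θ i * (σ j * σ i) := by
  calc θ j = θ j * θ i * (θ j * σ i) * σ i := by
        rw [mul_assoc (θ j * θ i), mul_assoc (θ j) (σ i), h.sigma_sq, mul_one,
          h.theta_theta_theta hij]
    _ = θ j * (θ i * θ j * σ i) * σ i := by simp only [mul_assoc]
    _ = θ j * θ i * (σ j * σ i) := by rw [h.theta_theta_sigma hij]; simp only [mul_assoc]
    _ = σ i * σ j * θ i * (σ j * σ i) := by rw [h.theta_mul_theta hij]

variable {σ θ : Fin (m + 1) → M} (h : IsBrauerFamily σ θ) {φ : Perm (Fin (m + 2)) →* M}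
  (hφ : ∀ i, φ (swap i.castSucc i.succ) = σ i)
include h hφ

theorem commute_theta_zero {g : Perm (Fin (m + 2))} (g_zero : g 0 = 0) (g_one : g 1 = 1) :
    Commute (φ g) (θ 0) := by
  let e : Fin m ↪ Fin (m + 2) := Fin.addNatEmb 2
  have fixed_of_notMem (x : Fin (m + 2)) (hx : x ∉ Set.range e) : g x = x := by
    induction x using Fin.cases with
    | zero => exact g_zero
    | succ x =>
      induction x using Fin.cases with
      | zero => exact g_one
      | succ x => exact absurd ⟨x, rfl⟩ hx
  obtain ⟨w, rfl⟩ := exists_viaEmbedding_eq e fixed_of_notMem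
  suffices Submonoid.comap (φ.comp (viaEmbeddingHom e)) (Submonoid.centralizer {θ 0}) = ⊤ by
    have hw : w ∈ Submonoid.comap (φ.comp (viaEmbeddingHom e)) (Submonoid.centralizer {θ 0}) :=
      this ▸ Submonoid.mem_top w
    exact (Submonoid.mem_centralizer_iff.mp hw _ rfl).symm
  cases m with
  | zero => exact Subsingleton.elim _ _
  | succ m =>
    rw [eq_top_iff, ← mclosure_swap_castSucc_succ, Submonoid.closure_le]
    rintro _ ⟨i, rfl⟩
    rw [SetLike.mem_coe, Submonoid.mem_comap, Submonoid.mem_centralizer_iff]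
    rintro _ rfl
    have : viaEmbedding (swap i.castSucc i.succ) e =
        swap (i.addNat 2).castSucc (i.addNat 2).succ := viaEmbedding_swap e _ _
    rw [MonoidHom.comp_apply, viaEmbeddingHom_apply, this, hφ]
    exact h.theta_sigma_comm (by simp)

theorem hook_castSucc_succ {Θ : Fin (m + 2) → Fin (m + 2) → M} (hΘ : IsConjEquivariant φ Θ)
    (Θ_zero_one : Θ 0 1 = θ 0) (i : Fin (m + 1)) : Θ i.castSucc i.succ = θ i := by
  induction i using Fin.induction with
  | zero => exact Θ_zero_one
  | succ i ih =>
    let g := swap i.castSucc.castSucc i.castSucc.succ * swap i.succ.castSucc i.succ.succ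
    have g_castSucc : g i.castSucc.castSucc = i.succ.castSucc := by
      simp only [g, Perm.mul_apply, swap_apply_def, Fin.ext_iff]
      grind
    have g_succ : g i.castSucc.succ = i.succ.succ := by
      simp only [g, Perm.mul_apply, swap_apply_def, Fin.ext_iff]
      grind
    rw [← g_castSucc, ← g_succ, ← hΘ g (Fin.castSucc_lt_succ).ne, ih, conjHom_apply,
      h.theta_eq_conj (i := i.castSucc) (j := i.succ) (by simp)]
    simp only [g, mul_inv_rev, swap_inv, map_mul, hφ]

theorem commute_hook {Θ : Fin (m + 2) → Fin (m + 2) → M} (hΘ : IsConjEquivariant φ Θ)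
    (Θ_zero_one : Θ 0 1 = θ 0) {a b c d : Fin (m + 2)} (habcd : [a, b, c, d].Nodup) :
    Commute (Θ a b) (Θ c d) := by
  have : 4 ≤ m + 2 := by simpa using habcd.length_le_card
  let i : Fin (m + 1) := 0
  let j : Fin (m + 1) := ⟨2, by lia⟩
  have base_nodup : [i.castSucc, i.succ, j.castSucc, j.succ].Nodup := by
    simp [i, j, Fin.ext_iff]
  refine hΘ.commute_of_commute base_nodup habcd ?_
  rw [h.hook_castSucc_succ hφ hΘ Θ_zero_one, h.hook_castSucc_succ hφ hΘ Θ_zero_one]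
  exact h.theta_comm (by simp [i, j])

theorem hook_chain {Θ : Fin (m + 2) → Fin (m + 2) → M} (hΘ : IsConjEquivariant φ Θ)
    (Θ_zero_one : Θ 0 1 = θ 0) {a b c : Fin (m + 2)} (habc : [a, b, c].Nodup) :
    Θ b c * Θ a b = φ (swap a b * swap b c) * Θ a b := by
  have : 3 ≤ m + 2 := by simpa using habc.length_le_card
  let i : Fin (m + 1) := 0
  let j : Fin (m + 1) := ⟨1, by lia⟩
  have base_nodup : [i.castSucc, i.succ, j.succ].Nodup := by
    simp [i, j, Fin.ext_iff]
  refine hΘ.chain_of_chain base_nodup habc ?_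
  change Θ j.castSucc j.succ * _ = φ (_ * swap j.castSucc j.succ) * _
  rw [h.hook_castSucc_succ hφ hΘ Θ_zero_one, h.hook_castSucc_succ hφ hΘ Θ_zero_one, map_mul, hφ,
    hφ, h.theta_mul_theta (by simp [i, j])]

theorem isHookSystem {Θ : Fin (m + 2) → Fin (m + 2) → M} (hΘ : IsConjEquivariant φ Θ)
    (Θ_zero_one : Θ 0 1 = θ 0) : IsHookSystem φ Θ where
  conj := hΘ
  symm hab := by
    refine hΘ.symm_of_commute hab ?_
    obtain ⟨g, hook_eq, swap_eq⟩ := hΘ.exists_conjHom_eq zero_ne_one hab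
    rw [hook_eq, swap_eq, Θ_zero_one, show φ (swap 0 1) = σ 0 from hφ 0]
    exact Commute.map ((h.sigma_theta 0).trans (h.theta_sigma 0).symm) _
  idem hab := by
    obtain ⟨g, hook_eq, -⟩ := hΘ.exists_conjHom_eq zero_ne_one hab
    rw [hook_eq, Θ_zero_one]
    exact IsIdempotentElem.map (h.theta_idem 0) _
  swap_mul hab := by
    obtain ⟨g, hook_eq, swap_eq⟩ := hΘ.exists_conjHom_eq zero_ne_one hab
    rw [hook_eq, swap_eq, Θ_zero_one, ← map_mul, show φ (swap 0 1) = σ 0 from hφ 0, h.sigma_theta]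
  comm := h.commute_hook hφ hΘ Θ_zero_one
  chain := h.hook_chain hφ hΘ Θ_zero_one

end IsBrauerFamily

theorem IsBrauerFamily.exists_isHookSystem {σ θ : Fin m → M} (h : IsBrauerFamily σ θ) :
    ∃ (φ : Perm (Fin (m + 1)) →* M) (Θ : Fin (m + 1) → Fin (m + 1) → M), IsHookSystem φ Θ ∧
      (∀ i, φ (swap i.castSucc i.succ) = σ i) ∧ ∀ i, Θ i.castSucc i.succ = θ i := by
  obtain ⟨φ, hφ⟩ := h.toIsCoxeterFamily.exists_monoidHom
  cases m with
  | zero =>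
    refine ⟨φ, fun _ _ ↦ 1, ?_, hφ, fun i ↦ i.elim0⟩
    constructor <;> simp [IsConjEquivariant, Subsingleton.elim _ (0 : Fin 1)]
  | succ m =>
    obtain ⟨Θ, hΘ, Θ_zero_one⟩ := exists_isConjEquivariant (φ := φ) (zero_ne_one' (Fin (m + 2)))
      fun _ ↦ h.commute_theta_zero hφ
    exact ⟨φ, Θ, h.isHookSystem hφ hΘ Θ_zero_one, hφ, h.hook_castSucc_succ hφ hΘ Θ_zero_one⟩

theorem IsBrauerFamily.finite_and_card_le {σ θ : Fin m → M} (h : IsBrauerFamily σ θ)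
    (closure_eq_top : Submonoid.closure (Set.range σ ∪ Set.range θ) = ⊤) :
    Finite M ∧ Nat.card M ≤ ∑ k ∈ Finset.range ((m + 1) / 2 + 1),
      (m + 1).factorial ^ 2 / (2 ^ (2 * k) * k.factorial ^ 2 * (m + 1 - 2 * k).factorial) := by
  obtain ⟨φ, Θ, hook, hφ, hΘ⟩ := h.exists_isHookSystem
  have generators_subset : Set.range σ ∪ Set.range θ ⊆
      Set.range φ ∪ {x | ∃ a b, a ≠ b ∧ Θ a b = x} := by
    refine Set.union_subset_union ?_ ?_ <;> rintro _ ⟨i, rfl⟩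
    · exact ⟨_, hφ i⟩
    · exact ⟨_, _, Fin.castSucc_lt_succ.ne, hΘ i⟩
  have := hook.finite_and_card_le
    (top_unique (closure_eq_top.symm.trans_le (Submonoid.closure_mono generators_subset)))
  rwa [Fintype.card_fin] at this

end BrauerFamily

section Presentation

theorem isBrauerFamily_sigmaB_thetaB (n : ℕ) :
    IsBrauerFamily (σB : Fin (n - 1) → BrauerMonoid n) θB where
  sigma_sq i := PresentedMonoid.mk_eq_mk_of_rel (.sigma_sq i)
  sigma_comm hij := PresentedMonoid.mk_eq_mk_of_rel (.sigma_comm _ _ (by simp only [Nat.dist]; lia))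
  braid hij := PresentedMonoid.mk_eq_mk_of_rel (.braid _ _ (by simp only [Nat.dist]; lia))
  theta_idem i := PresentedMonoid.mk_eq_mk_of_rel (.theta_idem i)
  theta_sigma i := PresentedMonoid.mk_eq_mk_of_rel (.theta_sigma i)
  sigma_theta i := PresentedMonoid.mk_eq_mk_of_rel (.sigma_theta i)
  theta_comm hij := PresentedMonoid.mk_eq_mk_of_rel (.theta_comm _ _ (by simp only [Nat.dist]; lia))
  theta_sigma_comm hij :=
    PresentedMonoid.mk_eq_mk_of_rel (.theta_sigma_comm _ _ (by simp only [Nat.dist]; lia))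
  theta_theta_theta hij :=
    PresentedMonoid.mk_eq_mk_of_rel (.theta_theta_theta _ _ (by simp only [Nat.dist]; lia))
  sigma_theta_theta hij :=
    PresentedMonoid.mk_eq_mk_of_rel (.sigma_theta_theta _ _ (by simp only [Nat.dist]; lia))
  theta_theta_sigma hij :=
    PresentedMonoid.mk_eq_mk_of_rel (.theta_theta_sigma _ _ (by simp only [Nat.dist]; lia))

theorem closure_range_sigmaB_union_range_thetaB (n : ℕ) :
    Submonoid.closure (Set.range σB ∪ Set.range θB : Set (BrauerMonoid n)) = ⊤ := by
  rw [← PresentedMonoid.closure_range_of, ← Set.Sum.elim_range]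
  congr 2
  ext (i | i) <;> rfl

end Presentation

/-- Corollary `corollary31` of Kudryavtseva–Mazorchuk: the monoid `T` is finite and
`|T| ≤ Σ_{k=0}^{⌊n/2⌋} (n!)² / (2^{2k} (k!)² (n-2k)!)`. -/
theorem brauer_card_le (n : ℕ) (hn : 1 ≤ n) :
    Finite (BrauerMonoid n) ∧
      Nat.card (BrauerMonoid n) ≤
        ∑ k ∈ Finset.range (n / 2 + 1),
          n.factorial ^ 2 / (2 ^ (2 * k) * k.factorial ^ 2 * (n - 2 * k).factorial) := by
  have := (isBrauerFamily_sigmaB_thetaB n).finite_and_card_le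
    (closure_range_sigmaB_union_range_thetaB n)
  rwa [Nat.sub_add_cancel hn] at this
end

section
/- Fix k ∈ {0,…,n}. Consider the fixed-point-free involutions f of Fin n ⊕ Fin n (permutations with f∘f = id and f(x) ≠ x for all x) such that exactly k elements i of the left copy satisfy that f(inl i) lies in the right copy. If n−k is odd, there are no such involutions; if n−k = 2l is even, their number equals (n!)² / (2^{2l}·(l!)²·k!) (an exact natural-number division). -/
/-!
Cutting a fixed-point-free involution `f` of `α ⊕ β` into its two halves gives an involution `g`
of `α` (which agrees with `f` as long as `f` stays in `α` and otherwise fixes the point), an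
involution `h` of `β`, and the bijection from the fixed points of `g` to those of `h` along which
`f` crosses from `α` to `β`. This data determines `f`, is arbitrary, and the rank of `f` is the
common number `k` of fixed points, for which there are `k!` bijections. The involutions of `α` with
`k` fixed points are the permutations of cycle type `2 + ⋯ + 2`, with `(|α| - k) / 2` summands, so
they form a single conjugacy class of known size.
-/

open Equiv Function
open scoped Nat

section PrimeExponent

variable {α : Type*} [Fintype α] {p : ℕ} [Fact p.Prime]

theorem card_eq_card_fixedPoints_add_of_pow_prime_eq_one [DecidableEq α] {σ : Perm α}
    (hσ : σ ^ p = 1) :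
    Fintype.card α = Nat.card (fixedPoints σ) + p * σ.cycleType.card := by
  have hsum : σ.cycleType.sum = p * σ.cycleType.card := by
    rw [Perm.cycleType_of_pow_prime_eq_one hσ]
    simp [mul_comm]
  rw [Nat.card_eq_fintype_card, Perm.card_fixedPoints, ← hsum,
    Nat.sub_add_cancel σ.sum_cycleType_le]

theorem pow_prime_eq_one_and_card_fixedPoints_iff [DecidableEq α] {k l : ℕ}
    (h : Fintype.card α = k + p * l) (σ : Perm α) :
    σ ^ p = 1 ∧ Nat.card (fixedPoints σ) = k ↔ σ.cycleType = Multiset.replicate l p := by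
  have hp : 0 < p := (Fact.out : p.Prime).pos
  constructor
  · rintro ⟨hσ, rfl⟩
    have hcard := card_eq_card_fixedPoints_add_of_pow_prime_eq_one hσ
    have hl : σ.cycleType.card = l := Nat.eq_of_mul_eq_mul_left hp (by lia)
    rw [Perm.cycleType_of_pow_prime_eq_one hσ, hl]
  · intro hσ
    have hpow : σ ^ p = 1 :=
      Perm.pow_prime_eq_one_iff.2 fun c hc => Multiset.eq_of_mem_replicate (hσ ▸ hc)
    have hcard := card_eq_card_fixedPoints_add_of_pow_prime_eq_one hpow
    rw [hσ, Multiset.card_replicate] at hcard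
    exact ⟨hpow, by lia⟩

theorem card_pow_prime_eq_one_mul {k l : ℕ} (h : Fintype.card α = k + p * l) :
    Nat.card {σ : Perm α // σ ^ p = 1 ∧ Nat.card (fixedPoints σ) = k} * (k ! * p ^ l * l !) =
      (Fintype.card α)! := by
  classical
  have hprod : ∏ m ∈ (Multiset.replicate l p).toFinset, ((Multiset.replicate l p).count m)! =
      l ! := by
    rcases eq_or_ne l 0 with rfl | hl
    · simp
    · simp [Multiset.toFinset_replicate, hl]
  have hsub : Fintype.card α - (Multiset.replicate l p).sum = k := by
    simp [h, mul_comm]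
  have hle : (Multiset.replicate l p).sum ≤ Fintype.card α ∧
      ∀ a ∈ Multiset.replicate l p, 2 ≤ a :=
    ⟨by simp [h, mul_comm], fun a ha =>
      Multiset.eq_of_mem_replicate ha ▸ (Fact.out : p.Prime).two_le⟩
  have hclass := Perm.card_of_cycleType_mul_eq α (Multiset.replicate l p)
  rw [if_pos hle, hsub, hprod, Multiset.prod_replicate] at hclass
  simp_rw [pow_prime_eq_one_and_card_fixedPoints_iff h, Nat.card_eq_fintype_card,
    Fintype.card_subtype]
  exact hclass

end PrimeExponent

theorem involutive_coe_iff_mul_self_eq_one {α : Type*} {σ : Perm α} :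
    Involutive σ ↔ σ * σ = 1 :=
  (Equiv.ext_iff (f := σ * σ) (g := 1)).symm

section Halves

variable {α β : Type*} {f : α ⊕ β → α ⊕ β}

/-- The left half of a self-map of `α ⊕ β`: it follows `f` as long as `f` stays in `α` and fixes
the points of `α` that `f` sends to `β`. -/
def leftHalf (f : α ⊕ β → α ⊕ β) (a : α) : α :=
  (f (Sum.inl a)).elim id fun _ => a

/-- The right half of a self-map of `α ⊕ β`: it follows `f` as long as `f` stays in `β` and fixes
the points of `β` that `f` sends to `α`. -/
def rightHalf (f : α ⊕ β → α ⊕ β) (b : β) : β :=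
  (f (Sum.inr b)).elim (fun _ => b) id

theorem involutive_leftHalf (hf : Involutive f) : Involutive (leftHalf f) := by
  intro a
  have := hf (Sum.inl a)
  rcases h : f (Sum.inl a) with a' | b <;> simp_all [leftHalf]

theorem involutive_rightHalf (hf : Involutive f) : Involutive (rightHalf f) := by
  intro b
  have := hf (Sum.inr b)
  rcases h : f (Sum.inr b) with a | b' <;> simp_all [rightHalf]

theorem isFixedPt_leftHalf_iff (hne : ∀ x, f x ≠ x) {a : α} :
    IsFixedPt (leftHalf f) a ↔ ∃ b, f (Sum.inl a) = Sum.inr b := by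
  have := hne (Sum.inl a)
  rcases h : f (Sum.inl a) with a' | b <;> simp_all [leftHalf, IsFixedPt]

theorem isFixedPt_rightHalf_iff (hne : ∀ x, f x ≠ x) {b : β} :
    IsFixedPt (rightHalf f) b ↔ ∃ a, f (Sum.inr b) = Sum.inl a := by
  have := hne (Sum.inr b)
  rcases h : f (Sum.inr b) with a | b' <;> simp_all [rightHalf, IsFixedPt]

theorem apply_inl_of_not_isFixedPt_leftHalf {a : α} (ha : ¬IsFixedPt (leftHalf f) a) :
    f (Sum.inl a) = Sum.inl (leftHalf f a) := by
  rcases h : f (Sum.inl a) with a' | b <;> simp_all [leftHalf, IsFixedPt]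

theorem apply_inr_of_not_isFixedPt_rightHalf {b : β} (hb : ¬IsFixedPt (rightHalf f) b) :
    f (Sum.inr b) = Sum.inr (rightHalf f b) := by
  rcases h : f (Sum.inr b) with a | b' <;> simp_all [rightHalf, IsFixedPt]

theorem exists_equiv_fixedPoints_halves (hf : Involutive f) (hne : ∀ x, f x ≠ x) :
    ∃ e : fixedPoints (leftHalf f) ≃ fixedPoints (rightHalf f),
      ∀ a : fixedPoints (leftHalf f), f (Sum.inl a) = Sum.inr ↑(e a) := by
  choose u hu using fun a : fixedPoints (leftHalf f) => (isFixedPt_leftHalf_iff hne).1 a.2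
  choose v hv using fun b : fixedPoints (rightHalf f) => (isFixedPt_rightHalf_iff hne).1 b.2
  have hu' (a) : f (Sum.inr (u a)) = Sum.inl a.1 := by rw [← hu, hf]
  have hv' (b) : f (Sum.inl (v b)) = Sum.inr b.1 := by rw [← hv, hf]
  refine ⟨⟨fun a => ⟨u a, (isFixedPt_rightHalf_iff hne).2 ⟨a, hu' a⟩⟩,
    fun b => ⟨v b, (isFixedPt_leftHalf_iff hne).2 ⟨b, hv' b⟩⟩, fun a => ?_, fun b => ?_⟩, hu⟩
  · exact Subtype.ext (Sum.inl_injective ((hv _).symm.trans (hu' a)))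
  · exact Subtype.ext (Sum.inr_injective ((hu _).symm.trans (hv' b)))

theorem card_fixedPoints_leftHalf [Fintype α] (hne : ∀ x, f x ≠ x) :
    Nat.card (fixedPoints (leftHalf f)) =
      (Finset.univ.filter fun a : α => (f (Sum.inl a)).isRight = true).card := by
  rw [← Fintype.card_subtype, ← Nat.card_eq_fintype_card]
  simp_rw [fixedPoints, isFixedPt_leftHalf_iff hne, Sum.isRight_iff, Set.coe_ofPred]

end Halves

section Glue

variable {α β : Type*} [DecidableEq α] [DecidableEq β] {g : α → α} {h : β → β}

/-- The self-map of `α ⊕ β` with halves `g` and `h` that exchanges their fixed points along `e`. -/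
def glue (g : α → α) (h : β → β) (e : fixedPoints g ≃ fixedPoints h) : α ⊕ β → α ⊕ β
  | Sum.inl a => if ha : g a = a then Sum.inr (e ⟨a, ha⟩) else Sum.inl (g a)
  | Sum.inr b => if hb : h b = b then Sum.inl (e.symm ⟨b, hb⟩) else Sum.inr (h b)

variable (e : fixedPoints g ≃ fixedPoints h)

theorem glue_inl_coe (a : fixedPoints g) : glue g h e (Sum.inl a) = Sum.inr ↑(e a) :=
  dif_pos a.2

theorem glue_inr_coe (b : fixedPoints h) : glue g h e (Sum.inr b) = Sum.inl ↑(e.symm b) :=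
  dif_pos b.2

theorem glue_inl_of_ne {a : α} (ha : g a ≠ a) : glue g h e (Sum.inl a) = Sum.inl (g a) :=
  dif_neg ha

theorem glue_inr_of_ne {b : β} (hb : h b ≠ b) : glue g h e (Sum.inr b) = Sum.inr (h b) :=
  dif_neg hb

theorem involutive_glue (hg : Involutive g) (hh : Involutive h) : Involutive (glue g h e) := by
  rintro (a | b)
  · by_cases ha : g a = a
    · rw [glue_inl_coe e ⟨a, ha⟩, glue_inr_coe, e.symm_apply_apply]
    · rw [glue_inl_of_ne e ha, glue_inl_of_ne e (hg.injective.ne ha), hg]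
  · by_cases hb : h b = b
    · rw [glue_inr_coe e ⟨b, hb⟩, glue_inl_coe, e.apply_symm_apply]
    · rw [glue_inr_of_ne e hb, glue_inr_of_ne e (hh.injective.ne hb), hh]

theorem glue_apply_ne (x : α ⊕ β) : glue g h e x ≠ x := by
  rcases x with a | b
  · by_cases ha : g a = a <;> simp [glue, ha]
  · by_cases hb : h b = b <;> simp [glue, hb]

theorem leftHalf_glue : leftHalf (glue g h e) = g := by
  ext a
  by_cases ha : g a = a <;> simp [leftHalf, glue, ha]

theorem rightHalf_glue : rightHalf (glue g h e) = h := by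
  ext b
  by_cases hb : h b = b <;> simp [rightHalf, glue, hb]

theorem glue_injective : Injective (glue g h) := by
  intro e e' hee'
  ext a
  apply Sum.inr_injective (α := α)
  rw [← glue_inl_coe, ← glue_inl_coe, hee']

theorem exists_glue_eq {f : α ⊕ β → α ⊕ β} (hf : Involutive f) (hne : ∀ x, f x ≠ x) :
    ∃ e : fixedPoints (leftHalf f) ≃ fixedPoints (rightHalf f),
      glue (leftHalf f) (rightHalf f) e = f := by
  obtain ⟨e, he⟩ := exists_equiv_fixedPoints_halves hf hne
  refine ⟨e, funext ?_⟩
  rintro (a | b)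
  · by_cases ha : leftHalf f a = a
    · rw [glue_inl_coe e ⟨a, ha⟩, he ⟨a, ha⟩]
    · rw [glue_inl_of_ne e ha, apply_inl_of_not_isFixedPt_leftHalf ha]
  · by_cases hb : rightHalf f b = b
    · rw [glue_inr_coe e ⟨b, hb⟩, ← hf (Sum.inl _), he, e.apply_symm_apply]
    · rw [glue_inr_of_ne e hb, apply_inr_of_not_isFixedPt_rightHalf hb]

end Glue

/-- The involutions of `α` with exactly `k` fixed points. -/
def involutionsWithFixedPoints (α : Type*) (k : ℕ) : Set (Perm α) :=
  {g | Involutive g ∧ Nat.card (fixedPoints g) = k}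

section Involutions

variable {α : Type*} [Fintype α] {k : ℕ}

theorem even_card_sub_of_mem_involutionsWithFixedPoints {g : Perm α}
    (hg : g ∈ involutionsWithFixedPoints α k) : Even (Fintype.card α - k) := by
  classical
  obtain ⟨hinv, rfl⟩ := hg
  have hsq : g ^ 2 = 1 := (sq g).trans (involutive_coe_iff_mul_self_eq_one.1 hinv)
  rw [card_eq_card_fixedPoints_add_of_pow_prime_eq_one hsq, Nat.add_sub_cancel_left]
  exact even_two_mul _

theorem card_involutionsWithFixedPoints_mul {l : ℕ} (h : Fintype.card α = k + 2 * l) :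
    Nat.card (involutionsWithFixedPoints α k) * (k ! * 2 ^ l * l !) = (Fintype.card α)! := by
  rw [← card_pow_prime_eq_one_mul h]
  simp only [involutionsWithFixedPoints, involutive_coe_iff_mul_self_eq_one, sq, Set.coe_ofPred]

end Involutions

/-- The Brauer diagrams of rank `k` between `α` and `β`: the perfect matchings of `α ⊕ β`, encoded
as fixed-point-free involutions, in which `k` blocks meet both summands. A block meeting both
summands is counted through its element of `α`. -/
def brauerDiagramsOfRank (α β : Type*) [Fintype α] (k : ℕ) : Set (Perm (α ⊕ β)) :=
  {f | f * f = 1 ∧ (∀ x, f x ≠ x) ∧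
    (Finset.univ.filter fun a : α => (f (Sum.inl a)).isRight = true).card = k}

section HalvesOfDiagram

variable {α β : Type*} [Fintype α] {k : ℕ} {f : Perm (α ⊕ β)}

theorem involutive_of_mem_brauerDiagramsOfRank (hf : f ∈ brauerDiagramsOfRank α β k) :
    Involutive f :=
  involutive_coe_iff_mul_self_eq_one.2 hf.1

theorem toPerm_leftHalf_mem (hf : f ∈ brauerDiagramsOfRank α β k) :
    (involutive_leftHalf (involutive_of_mem_brauerDiagramsOfRank hf)).toPerm ∈
      involutionsWithFixedPoints α k :=
  ⟨involutive_leftHalf (involutive_of_mem_brauerDiagramsOfRank hf),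
    (card_fixedPoints_leftHalf hf.2.1).trans hf.2.2⟩

theorem toPerm_rightHalf_mem (hf : f ∈ brauerDiagramsOfRank α β k) :
    (involutive_rightHalf (involutive_of_mem_brauerDiagramsOfRank hf)).toPerm ∈
      involutionsWithFixedPoints β k := by
  have hinv := involutive_of_mem_brauerDiagramsOfRank hf
  obtain ⟨e, -⟩ := exists_equiv_fixedPoints_halves hinv hf.2.1
  exact ⟨involutive_rightHalf hinv, (Nat.card_congr e).symm.trans (toPerm_leftHalf_mem hf).2⟩

end HalvesOfDiagram

/-- The data that a Brauer diagram of rank `k` is glued from: involutions of `α` and of `β` with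
`k` fixed points each, and a bijection between their fixed points. -/
abbrev BrauerGluingData (α β : Type*) (k : ℕ) : Type _ :=
  Σ p : involutionsWithFixedPoints α k × involutionsWithFixedPoints β k,
    fixedPoints p.1.1 ≃ fixedPoints p.2.1

namespace BrauerGluingData

variable {α β : Type*} [Fintype α] [DecidableEq α] [DecidableEq β] {k : ℕ}

/-- The Brauer diagram with the given halves and the given crossing bijection. -/
def toDiagram (d : BrauerGluingData α β k) : brauerDiagramsOfRank α β k :=
  have hinv := involutive_glue d.2 d.1.1.2.1 d.1.2.2.1
  ⟨hinv.toPerm, involutive_coe_iff_mul_self_eq_one.1 hinv, glue_apply_ne d.2, by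
    rw [hinv.coe_toPerm, ← card_fixedPoints_leftHalf (glue_apply_ne d.2), leftHalf_glue]
    exact d.1.1.2.2⟩

theorem toDiagram_injective :
    Injective (toDiagram : BrauerGluingData α β k → brauerDiagramsOfRank α β k) := by
  rintro ⟨⟨⟨g, hg⟩, ⟨h, hh⟩⟩, e⟩ ⟨⟨⟨g', hg'⟩, ⟨h', hh'⟩⟩, e'⟩ heq
  have hglue : glue g h e = glue g' h' e' :=
    congrArg (fun f : brauerDiagramsOfRank α β k => ⇑f.1) heq
  obtain rfl : g = g' := by
    rw [← DFunLike.coe_fn_eq, ← leftHalf_glue e, hglue, leftHalf_glue]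
  obtain rfl : h = h' := by
    rw [← DFunLike.coe_fn_eq, ← rightHalf_glue e, hglue, rightHalf_glue]
  obtain rfl : e = e' := glue_injective hglue
  rfl

theorem toDiagram_surjective :
    Surjective (toDiagram : BrauerGluingData α β k → brauerDiagramsOfRank α β k) := by
  rintro ⟨f, hf⟩
  obtain ⟨e, he⟩ := exists_glue_eq (involutive_of_mem_brauerDiagramsOfRank hf) hf.2.1
  exact ⟨⟨(⟨_, toPerm_leftHalf_mem hf⟩, ⟨_, toPerm_rightHalf_mem hf⟩), e⟩,
    Subtype.ext (DFunLike.coe_injective he)⟩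

end BrauerGluingData

theorem card_equiv_of_card_eq {γ δ : Type*} [Finite γ] [Finite δ]
    (h : Nat.card γ = Nat.card δ) : Nat.card (γ ≃ δ) = (Nat.card γ)! := by
  obtain ⟨e⟩ := Finite.card_eq.1 h
  rw [← Nat.card_perm]
  exact Nat.card_congr (equivCongr (Equiv.refl γ) e.symm)

theorem card_brauerDiagramsOfRank (α β : Type*) [Fintype α] [Finite β] (k : ℕ) :
    Nat.card (brauerDiagramsOfRank α β k) =
      Nat.card (involutionsWithFixedPoints α k) * Nat.card (involutionsWithFixedPoints β k) *
        k ! := by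
  classical
  have := Fintype.ofFinite β
  have hcrossings (p : involutionsWithFixedPoints α k × involutionsWithFixedPoints β k) :
      Nat.card (fixedPoints p.1.1 ≃ fixedPoints p.2.1) = k ! := by
    rw [card_equiv_of_card_eq (p.1.2.2.trans p.2.2.2.symm), p.1.2.2]
  calc Nat.card (brauerDiagramsOfRank α β k)
      = Nat.card (BrauerGluingData α β k) :=
        (Nat.card_congr (Equiv.ofBijective _ ⟨BrauerGluingData.toDiagram_injective,
          BrauerGluingData.toDiagram_surjective⟩)).symm
    _ = Nat.card (involutionsWithFixedPoints α k × involutionsWithFixedPoints β k) * k ! := by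
        rw [Nat.card_sigma, Finset.sum_congr rfl fun p _ => hcrossings p, Finset.sum_const,
          Finset.card_univ, smul_eq_mul, Nat.card_eq_fintype_card]
    _ = _ := by rw [Nat.card_prod]

theorem card_brauer_rank_general (α β : Type*) [Fintype α] [Fintype β] (k : ℕ) :
    (Odd (Fintype.card α - k) ∨ Odd (Fintype.card β - k) → brauerDiagramsOfRank α β k = ∅) ∧
    ∀ l m : ℕ, Fintype.card α = k + 2 * l → Fintype.card β = k + 2 * m →
      Nat.card (brauerDiagramsOfRank α β k) =
        (Fintype.card α)! * (Fintype.card β)! / (2 ^ (l + m) * (l ! * m !) * k !) := by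
  refine ⟨fun hodd => Set.eq_empty_of_forall_notMem fun f hf => ?_, fun l m hα hβ => ?_⟩
  · rcases hodd with hα | hβ
    · exact Nat.not_even_iff_odd.2 hα
        (even_card_sub_of_mem_involutionsWithFixedPoints (toPerm_leftHalf_mem hf))
    · exact Nat.not_even_iff_odd.2 hβ
        (even_card_sub_of_mem_involutionsWithFixedPoints (toPerm_rightHalf_mem hf))
  · rw [card_brauerDiagramsOfRank, ← card_involutionsWithFixedPoints_mul hα,
      ← card_involutionsWithFixedPoints_mul hβ]
    refine (Nat.div_eq_of_eq_mul_left (by positivity) ?_).symm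
    ring

/-- Proposition `comb`(b) of Kudryavtseva–Mazorchuk: elements of the Brauer monoid `𝔅_n`
are fixed-point-free involutions of `Fin n ⊕ Fin n`, and the rank is the number of blocks
meeting both copies.  For `k ≤ n`, if `n - k` is odd there are no elements of rank `k`,
and if `n - k = 2l` their number is `(n!)² / (2^{2l} (l!)² k!)`. -/
theorem card_brauer_rank (n k : ℕ) (hk : k ≤ n) :
    (Odd (n - k) →
      {f : Equiv.Perm (Fin n ⊕ Fin n) | f * f = 1 ∧ (∀ x, f x ≠ x) ∧
        (Finset.univ.filter fun i : Fin n => (f (Sum.inl i)).isRight = true).card = k} = ∅) ∧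
    (∀ l : ℕ, n - k = 2 * l →
      Nat.card {f : Equiv.Perm (Fin n ⊕ Fin n) | f * f = 1 ∧ (∀ x, f x ≠ x) ∧
          (Finset.univ.filter fun i : Fin n => (f (Sum.inl i)).isRight = true).card = k} =
        n.factorial ^ 2 / (2 ^ (2 * l) * l.factorial ^ 2 * k.factorial)) := by
  obtain ⟨hempty, hcard⟩ := card_brauer_rank_general (Fin n) (Fin n) k
  rw [Fintype.card_fin] at hempty hcard
  refine ⟨fun hodd => hempty (.inl hodd), fun l hl => ?_⟩
  rw [sq, sq, two_mul]
  exact hcard l l (by lia) (by lia)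
end

section
/- Let m_1,…,m_n be non-negative integers with Σ_{i=1}^n i·m_i = n. The number of partitions of Fin n ⊕ Fin n such that every block B contains equally many elements of the left copy as of the right copy, and such that for each i ∈ {1,…,n} exactly m_i blocks contain precisely i elements of the left copy, equals (n!)² / Π_{i=1}^n (m_i!·(i!)^{2m_i}) (an exact natural-number division). -/
/-!
Colour the points of `Fin n ⊕ Fin n` by the copy they lie in, and attach to each block the vector
counting its points of each colour; the type of an element of `IT_n` is the multiset of these
vectors. For an arbitrary colouring `c : X → C`, the number of partitions of `X` with a given
multiset of vectors is found by counting the bijections that respect a map to a set of values,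
of which there are `∏ (fibre size)!`, three times. Let `s k` be the vectors, indexed by labels `k`.

* Bijections from `X` to the model with `s k j` points of label `k` and colour `j` that respect
  colours number `∏ j, |c⁻¹(j)|!`.
* Among these, `∏ k, ∏ j, (s k j)!` induce a given labelling of `X`.
* A labelling of `X` is a partition together with a bijection from its blocks to the labels that
  respects the vectors, and there are `∏ v, (multiplicity of v)!` such bijections.
-/

open Finset
open scoped Nat

section EquivOver

variable {α β κ : Type*} [Fintype α] [Fintype β] [DecidableEq κ]

lemma exists_equiv_comp_eq {f : α → κ} {g : β → κ}
    (h : ∀ k, #{a | f a = k} = #{b | g b = k}) : ∃ e : α ≃ β, g ∘ e = f := by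
  have fiberEquiv (k : κ) : {a // f a = k} ≃ {b // g b = k} :=
    Fintype.equivOfCardEq (by rw [Fintype.card_subtype, Fintype.card_subtype, h k])
  exact ⟨Equiv.ofFiberEquiv fiberEquiv, funext (Equiv.ofFiberEquiv_map fiberEquiv)⟩

lemma card_perm_comp_eq_self (g : β → κ) {S : Finset κ} (hS : ∀ b, g b ∈ S) :
    Nat.card {σ : Equiv.Perm β // g ∘ σ = g} = ∏ k ∈ S, (#{b | g b = k})! := by
  classical
  rw [Nat.card_eq_fintype_card, DomMulAct.stabilizer_card']
  simp only [Fintype.card_subtype]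
  refine prod_subset (image_subset_iff.2 fun b _ => hS b) fun k _ hk => ?_
  have fiber_empty : ({b | g b = k} : Finset β) = ∅ :=
    filter_eq_empty_iff.2 fun b _ hb => hk (hb ▸ mem_image_of_mem g (mem_univ b))
  rw [fiber_empty, card_empty, Nat.factorial_zero]

lemma card_equiv_comp_eq {f : α → κ} {g : β → κ}
    (h : ∀ k, #{a | f a = k} = #{b | g b = k}) {S : Finset κ} (hS : ∀ b, g b ∈ S) :
    Nat.card {e : α ≃ β // g ∘ e = f} = ∏ k ∈ S, (#{b | g b = k})! := by
  obtain ⟨e₀, rfl⟩ := exists_equiv_comp_eq h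
  rw [← card_perm_comp_eq_self g hS]
  refine Nat.card_congr ((Equiv.equivCongr e₀ (Equiv.refl β)).subtypeEquiv fun e => ?_)
  rw [← e₀.symm.surjective.injective_comp_right.eq_iff, Function.comp_assoc, Function.comp_assoc,
    e₀.self_comp_symm]
  rfl

end EquivOver

section ColorCount

variable {X C K : Type*} [DecidableEq C]

/-- The colour vector of `B` under the colouring `c`: the number of points of `B` of each colour. -/
def colorCount (c : X → C) (B : Finset X) (j : C) : ℕ := #{x ∈ B | c x = j}

lemma surjective_of_colorCount_ne_zero [Fintype X] [DecidableEq K] {c : X → C} {f : X → K}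
    (hf : ∀ k, colorCount c {x | f x = k} ≠ 0) : f.Surjective := by
  intro k
  obtain ⟨j, hj⟩ := Function.ne_iff.1 (hf k)
  obtain ⟨x, hx⟩ := card_ne_zero.1 hj
  exact ⟨x, mem_filter_univ x |>.1 (mem_filter.1 hx).1⟩

/-- The model of a coloured set divided into labelled cells: the cell of label `k` has `s k j`
points of colour `j`. The label and colour of `y` are `y.1.1` and `y.1.2`. -/
abbrev Cells (s : K → C → ℕ) : Type _ := Σ p : K × C, Fin (s p.1 p.2)

variable {s : K → C → ℕ}

lemma colorCount_label_of_equiv_cells [Fintype X] [DecidableEq K] {c : X → C} {e : X ≃ Cells s}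
    (he : (fun y => y.1.2) ∘ e = c) (k : K) : colorCount c {x | (e x).1.1 = k} = s k := by
  subst he
  funext j
  have cellEquiv : {x // (e x).1.1 = k ∧ (e x).1.2 = j} ≃ Fin (s k j) :=
    (e.subtypeEquiv fun x => (Prod.ext_iff (y := (k, j))).symm).trans (Equiv.sigmaSubtype (k, j))
  rw [colorCount, filter_filter, ← Fintype.card_fin (s k j), ← Fintype.card_congr cellEquiv,
    Fintype.card_subtype]
  rfl

variable [Fintype C] [Fintype K]

lemma card_cells_fst [DecidableEq K] (p : K × C) : #{y : Cells s | y.1 = p} = s p.1 p.2 := by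
  rw [← Fintype.card_subtype, Fintype.card_congr (Equiv.sigmaSubtype p), Fintype.card_fin]

lemma card_cells_color (j : C) : #{y : Cells s | y.1.2 = j} = ∑ k, s k j := by
  calc #{y : Cells s | y.1.2 = j}
      = ∑ k, ∑ j', ∑ _i : Fin (s k j'), if j' = j then 1 else 0 := by
        rw [card_filter, Fintype.sum_sigma, Fintype.sum_prod_type]
    _ = ∑ k, s k j := by simp

variable [Fintype X] {c : X → C}

lemma card_equiv_cells (hs : ∀ j, ∑ k, s k j = colorCount c univ j) :
    Nat.card {e : X ≃ Cells s // (fun y => y.1.2) ∘ e = c} = ∏ j, (colorCount c univ j)! := by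
  rw [card_equiv_comp_eq (fun j => by rw [card_cells_color, hs, colorCount]) fun _ => mem_univ _]
  simp_rw [card_cells_color, hs]

variable [DecidableEq K]

lemma card_equiv_cells_of_label {f : X → K} (hf : ∀ k, colorCount c {x | f x = k} = s k) :
    Nat.card {e : X ≃ Cells s // Sigma.fst ∘ e = fun x => (f x, c x)} = ∏ k, ∏ j, (s k j)! := by
  have fiber_card (p : K × C) : #{x | (f x, c x) = p} = #{y : Cells s | y.1 = p} := by
    rw [card_cells_fst, ← hf, colorCount, filter_filter]
    simp only [Prod.ext_iff]
  rw [card_equiv_comp_eq fiber_card fun _ => mem_univ _, Fintype.prod_prod_type]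
  simp_rw [card_cells_fst]

lemma card_fun_colorCount_mul (hs : ∀ j, ∑ k, s k j = colorCount c univ j) :
    Nat.card {f : X → K // ∀ k, colorCount c {x | f x = k} = s k} * ∏ k, ∏ j, (s k j)! =
      ∏ j, (colorCount c univ j)! := by
  classical
  let label (e : {e : X ≃ Cells s // (fun y => y.1.2) ∘ e = c}) (x : X) : K := (e.1 x).1.1
  have card_fiber (f : {f : X → K // ∀ k, colorCount c {x | f x = k} = s k}) :
      Nat.card {e // label e = f} = ∏ k, ∏ j, (s k j)! := by
    rw [← card_equiv_cells_of_label f.2]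
    refine Nat.card_congr ((Equiv.subtypeSubtypeEquivSubtypeInter _
      fun e : X ≃ Cells s => (fun x => (e x).1.1) = f).trans (Equiv.subtypeEquivRight fun e => ?_))
    simp only [funext_iff, Function.comp_apply, Prod.ext_iff, forall_and, and_comm]
  rw [← card_equiv_cells hs, ← Nat.card_congr (Equiv.sigmaSubtypeFiberEquiv label
    (fun f => ∀ k, colorCount c {x | f x = k} = s k) fun e => colorCount_label_of_equiv_cells e.2),
    Nat.card_sigma, Fintype.sum_congr _ _ card_fiber,
    sum_const, card_univ, smul_eq_mul, Nat.card_eq_fintype_card]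

end ColorCount

section Labelled

lemma exists_equiv_comp_eq_of_surjective {X A K : Type*} {ρ : X → A} {f : X → K}
    (hρ : ρ.Surjective) (hf : f.Surjective) (h : ∀ x y, ρ x = ρ y ↔ f x = f y) :
    ∃ e : A ≃ K, e ∘ ρ = f := by
  have lift_apply (x : X) : f (Function.surjInv hρ (ρ x)) = f x :=
    (h _ _).1 (Function.surjInv_eq hρ (ρ x))
  refine ⟨Equiv.ofBijective (f ∘ Function.surjInv hρ) ⟨fun a b hab => ?_, fun k => ?_⟩,
    funext lift_apply⟩
  · simpa only [Function.surjInv_eq] using (h _ _).2 hab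
  · obtain ⟨x, rfl⟩ := hf k
    exact ⟨ρ x, lift_apply x⟩

variable {X K : Type*} [Fintype X] [DecidableEq X]

/-- The block of `P` containing `x`, as an element of the subtype of blocks. -/
def blockOf (P : Finpartition (univ : Finset X)) (x : X) : P.parts :=
  ⟨P.part x, P.part_mem.2 (mem_univ x)⟩

lemma blockOf_eq_iff {P : Finpartition (univ : Finset X)} {x : X} {B : P.parts} :
    blockOf P x = B ↔ x ∈ B.1 := by
  rw [Subtype.ext_iff]
  exact P.part_eq_iff_mem B.2

lemma blockOf_surjective (P : Finpartition (univ : Finset X)) : (blockOf P).Surjective := by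
  intro B
  obtain ⟨x, hx⟩ := P.nonempty_of_mem_parts B.2
  exact ⟨x, blockOf_eq_iff.2 hx⟩

lemma filter_equiv_blockOf_eq [DecidableEq K] {P : Finpartition (univ : Finset X)}
    (e : P.parts ≃ K) (k : K) :
    ({x | e (blockOf P x) = k} : Finset X) = e.symm k := by
  ext x
  rw [mem_filter_univ, ← Equiv.eq_symm_apply, blockOf_eq_iff]

/-- A partition with blocks labelled bijectively by `K`, seen as the surjection that sends each
point to the label of its block. -/
def blockLabel (p : Σ P : Finpartition (univ : Finset X), P.parts ≃ K) :
    {f : X → K // f.Surjective} :=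
  ⟨p.2 ∘ blockOf p.1, p.2.surjective.comp (blockOf_surjective p.1)⟩

lemma blockLabel_injective :
    (blockLabel : (Σ P : Finpartition (univ : Finset X), P.parts ≃ K) → _).Injective := by
  classical
  rintro ⟨P, e⟩ ⟨Q, e'⟩ h
  have block_eq (k : K) : (e.symm k).1 = (e'.symm k).1 := by
    rw [← filter_equiv_blockOf_eq, ← filter_equiv_blockOf_eq]
    exact congrArg (fun f : X → K => ({x | f x = k} : Finset X)) (congrArg Subtype.val h)
  obtain rfl : P = Q := by
    ext B
    constructor
    · intro hB
      have block_mem := (e'.symm (e ⟨B, hB⟩)).2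
      rwa [← block_eq, e.symm_apply_apply] at block_mem
    · intro hB
      have block_mem := (e.symm (e' ⟨B, hB⟩)).2
      rwa [block_eq, e'.symm_apply_apply] at block_mem
  obtain rfl : e = e' :=
    Equiv.symm_bijective.injective (Equiv.ext fun k => Subtype.ext (block_eq k))
  rfl

lemma blockLabel_surjective :
    (blockLabel : (Σ P : Finpartition (univ : Finset X), P.parts ≃ K) → _).Surjective := by
  classical
  rintro ⟨f, hf⟩
  let P : Finpartition (univ : Finset X) := Finpartition.ofSetoid (Setoid.ker f)
  have blockOf_eq (x y : X) : blockOf P x = blockOf P y ↔ f x = f y := by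
    rw [blockOf_eq_iff, eq_comm]
    exact Finpartition.mem_part_ofSetoid_iff_rel
  obtain ⟨e, he⟩ := exists_equiv_comp_eq_of_surjective (blockOf_surjective P) hf blockOf_eq
  exact ⟨⟨P, e⟩, Subtype.ext he⟩

end Labelled

section ColorType

lemma count_map_val {α κ : Type*} [DecidableEq κ] (A : Finset α) (f : α → κ) (k : κ) :
    (A.val.map f).count k = #{a ∈ A | f a = k} := by
  rw [Multiset.count_map, card_def, filter_val]
  simp only [eq_comm]

variable {X C K : Type*} [DecidableEq X] [DecidableEq C]

/-- The type of a partition of a coloured set: the multiset of the colour vectors of its blocks. -/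
def colorType {S : Finset X} (c : X → C) (P : Finpartition S) : Multiset (C → ℕ) :=
  P.parts.val.map (colorCount c)

lemma colorType_eq_map_univ {S : Finset X} (c : X → C) (P : Finpartition S) :
    colorType c P = univ.val.map fun B : P.parts => colorCount c B.1 :=
  (Multiset.attach_map_val' P.parts.val (colorCount c)).symm

variable [Fintype X] {c : X → C} {s : K → C → ℕ}

lemma comp_equiv_eq_colorCount_iff [DecidableEq K] {P : Finpartition (univ : Finset X)}
    (e : P.parts ≃ K) :
    (s ∘ e = fun B => colorCount c B.1) ↔ ∀ k, colorCount c {x | e (blockOf P x) = k} = s k := by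
  simp_rw [filter_equiv_blockOf_eq, funext_iff (f := s ∘ e), ← e.symm.forall_congr_right,
    Function.comp_apply, Equiv.apply_symm_apply, eq_comm]

lemma card_fun_colorCount_eq_sum_card_equiv [Finite K] [DecidableEq K] (hs : ∀ k, s k ≠ 0) :
    Nat.card {f : X → K // ∀ k, colorCount c {x | f x = k} = s k} =
      ∑ P : Finpartition (univ : Finset X),
        Nat.card {e : P.parts ≃ K // s ∘ e = fun B => colorCount c B.1} := by
  have surjective_of_label (f : X → K) (hf : ∀ k, colorCount c {x | f x = k} = s k) :
      f.Surjective := surjective_of_colorCount_ne_zero fun k => hf k ▸ hs k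
  calc Nat.card {f : X → K // ∀ k, colorCount c {x | f x = k} = s k}
      = Nat.card {f : {f : X → K // f.Surjective} // ∀ k, colorCount c {x | f.1 x = k} = s k} :=
        Nat.card_congr (Equiv.subtypeSubtypeEquivSubtype (surjective_of_label _)).symm
    _ = Nat.card {p : Σ P : Finpartition (univ : Finset X), P.parts ≃ K //
          s ∘ p.2 = fun B => colorCount c B.1} :=
        Nat.card_congr ((Equiv.ofBijective blockLabel
          ⟨blockLabel_injective, blockLabel_surjective⟩).subtypeEquiv
            fun p => comp_equiv_eq_colorCount_iff p.2).symm
    _ = Nat.card (Σ P : Finpartition (univ : Finset X),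
          {e : P.parts ≃ K // s ∘ e = fun B => colorCount c B.1}) :=
        Nat.card_congr ⟨fun p => ⟨p.1.1, p.1.2, p.2⟩, fun p => ⟨⟨p.1, p.2.1⟩, p.2.2⟩,
          fun _ => rfl, fun _ => rfl⟩
    _ = _ := Nat.card_sigma

variable [Fintype K] [Fintype C]

lemma card_equiv_parts_eq_ite (P : Finpartition (univ : Finset X)) :
    Nat.card {e : P.parts ≃ K // s ∘ e = fun B => colorCount c B.1} =
      if colorType c P = univ.val.map s then
        ∏ v ∈ (univ.val.map s).toFinset, ((univ.val.map s).count v)! else 0 := by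
  split_ifs with hP
  · rw [colorType_eq_map_univ] at hP
    have fiber_card (v : C → ℕ) : #{B : P.parts | colorCount c B.1 = v} = #{k | s k = v} := by
      rw [← count_map_val, ← count_map_val, hP]
    rw [card_equiv_comp_eq fiber_card (S := (univ.val.map s).toFinset) (by simp)]
    simp_rw [count_map_val]
  · have no_labelling : IsEmpty {e : P.parts ≃ K // s ∘ e = fun B => colorCount c B.1} := by
      refine ⟨fun ⟨e, he⟩ => hP ?_⟩
      rw [colorType_eq_map_univ, ← he, ← Multiset.map_map, Multiset.map_univ_val_equiv]
    exact Nat.card_of_isEmpty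

lemma card_colorType_eq_map_mul (hs : ∀ k, s k ≠ 0)
    (hsum : ∀ j, ∑ k, s k j = colorCount c univ j) :
    Nat.card {P : Finpartition (univ : Finset X) // colorType c P = univ.val.map s} *
        ((∏ v ∈ (univ.val.map s).toFinset, ((univ.val.map s).count v)!) * ∏ k, ∏ j, (s k j)!) =
      ∏ j, (colorCount c univ j)! := by
  classical
  rw [← card_fun_colorCount_mul hsum, card_fun_colorCount_eq_sum_card_equiv hs, ← mul_assoc]
  simp_rw [card_equiv_parts_eq_ite]
  rw [← sum_filter, sum_const, smul_eq_mul, Nat.card_eq_fintype_card, Fintype.card_subtype]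

theorem card_IT_type_general {T : Multiset (C → ℕ)} (hT : 0 ∉ T)
    (hsum : T.sum = colorCount c univ) :
    Nat.card {P : Finpartition (univ : Finset X) // colorType c P = T} *
        ((∏ v ∈ T.toFinset, (T.count v)!) * (T.map fun v => ∏ j, (v j)!).prod) =
      ∏ j, (colorCount c univ j)! := by
  have vectors_ne_zero (k : T) : (k : C → ℕ) ≠ 0 := fun hk => hT (hk ▸ Multiset.coe_mem)
  have vectors_sum (j : C) : ∑ k : T, (k : C → ℕ) j = colorCount c univ j := by
    rw [← hsum, Multiset.sum_eq_sum_coe, Finset.sum_apply]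
  have map_vectors : univ.val.map (fun k : T => (k : C → ℕ)) = T := Multiset.map_univ_coe T
  have prod_vectors : ∏ k : T, ∏ j, ((k : C → ℕ) j)! = (T.map fun v => ∏ j, (v j)!).prod :=
    congrArg Multiset.prod (Multiset.map_univ T fun v => ∏ j, (v j)!)
  have count := card_colorType_eq_map_mul vectors_ne_zero vectors_sum
  rwa [map_vectors, prod_vectors] at count

end ColorType

section Balanced

variable (C : Type*) (S : Finset ℕ) (m : ℕ → ℕ)

/-- The type of a partition all of whose blocks contain equally many points of each colour, with
`m i` blocks having `i` points of each colour for `i ∈ S`, and no other blocks. For two colours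
(left and right) and `S = Icc 1 n` this is the type `(m_1, …, m_n)` of an element of `IT_n`. -/
def balancedType : Multiset (C → ℕ) := ∑ i ∈ S, m i • {Function.const C i}

variable {C S m}

lemma exists_eq_const_of_mem_balancedType {v : C → ℕ} (hv : v ∈ balancedType C S m) :
    ∃ i ∈ S, v = Function.const C i := by
  obtain ⟨i, hi, hvi⟩ := Multiset.mem_sum.1 hv
  exact ⟨i, hi, Multiset.mem_singleton.1 (Multiset.mem_of_mem_nsmul hvi)⟩

lemma zero_notMem_balancedType [Nonempty C] (hS : 0 ∉ S) : 0 ∉ balancedType C S m := by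
  intro h
  obtain ⟨i, hi, h0⟩ := exists_eq_const_of_mem_balancedType h
  obtain rfl : 0 = i := congrFun h0 (Classical.arbitrary C)
  exact hS hi

lemma sum_balancedType : (balancedType C S m).sum = Function.const C (∑ i ∈ S, i * m i) := by
  funext j
  simp [balancedType, Multiset.sum_sum, Multiset.sum_nsmul, mul_comm]

lemma prod_map_balancedType {M : Type*} [CommMonoid M] (f : (C → ℕ) → M) :
    ((balancedType C S m).map f).prod = ∏ i ∈ S, f (Function.const C i) ^ m i := by
  rw [balancedType, ← Multiset.coe_mapAddMonoidHom, map_sum, Multiset.prod_sum]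
  simp only [map_nsmul, Multiset.coe_mapAddMonoidHom, Multiset.map_singleton, Multiset.prod_nsmul,
    Multiset.prod_singleton]

lemma count_const_balancedType [Nonempty C] [DecidableEq (C → ℕ)] {i : ℕ} (hi : i ∈ S) :
    (balancedType C S m).count (Function.const C i) = m i := by
  simp [balancedType, Multiset.count_sum', Multiset.count_nsmul, Multiset.count_singleton, hi]

lemma prod_count_balancedType [Nonempty C] [DecidableEq (C → ℕ)] :
    ∏ v ∈ (balancedType C S m).toFinset, ((balancedType C S m).count v)! = ∏ i ∈ S, (m i)! := by
  have toFinset_subset : (balancedType C S m).toFinset ⊆ S.image (Function.const C) := by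
    intro v hv
    obtain ⟨i, hi, rfl⟩ := exists_eq_const_of_mem_balancedType (Multiset.mem_toFinset.1 hv)
    exact mem_image_of_mem _ hi
  rw [prod_subset toFinset_subset fun v _ hv => by
      rw [Multiset.count_eq_zero_of_notMem (mt Multiset.mem_toFinset.2 hv), Nat.factorial_zero],
    prod_image Function.const_injective.injOn]
  exact prod_congr rfl fun i hi => by rw [count_const_balancedType hi]

variable {X : Type*} [Fintype X] [DecidableEq C]

lemma colorType_eq_balancedType_iff [DecidableEq X] [Fintype C] [Nonempty C] {c : X → C}
    {P : Finpartition (univ : Finset X)} :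
    colorType c P = balancedType C S m ↔
      (∀ B ∈ P.parts, ∃ i ∈ S, colorCount c B = Function.const C i) ∧
        ∀ i ∈ S, #{B ∈ P.parts | colorCount c B = Function.const C i} = m i := by
  constructor
  · intro hP
    refine ⟨fun B hB => exists_eq_const_of_mem_balancedType (m := m) ?_, fun i hi => ?_⟩
    · exact hP ▸ Multiset.mem_map_of_mem _ hB
    · rw [← count_map_val, ← count_const_balancedType (C := C) (m := m) hi, ← hP, colorType]
  · rintro ⟨blocks_balanced, card_blocks⟩
    ext v
    rw [colorType, count_map_val]
    by_cases hv : ∃ i ∈ S, v = Function.const C i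
    · obtain ⟨i, hi, rfl⟩ := hv
      rw [card_blocks i hi, count_const_balancedType hi]
    · rw [Multiset.count_eq_zero_of_notMem (mt exists_eq_const_of_mem_balancedType hv),
        card_eq_zero, filter_eq_empty_iff]
      rintro B hB rfl
      exact hv (blocks_balanced B hB)

lemma mem_Icc_of_colorCount_eq_const {c : X → C} {B : Finset X} (hB : B.Nonempty) {i : ℕ}
    (hi : colorCount c B = Function.const C i) (j : C) : i ∈ Icc 1 (colorCount c univ j) := by
  obtain ⟨x, hx⟩ := hB
  rw [mem_Icc]
  constructor
  · rw [← show colorCount c B (c x) = i from congrFun hi (c x)]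
    exact card_pos.2 ⟨x, mem_filter.2 ⟨hx, rfl⟩⟩
  · rw [← show colorCount c B j = i from congrFun hi j]
    exact card_le_card (filter_subset_filter _ (subset_univ B))

end Balanced

section Sum

variable {α β : Type*}

lemma colorCount_isLeft_eq_const_iff {B : Finset (α ⊕ β)} {i : ℕ} :
    colorCount Sum.isLeft B = Function.const Bool i ↔
      #{x ∈ B | x.isLeft = true} = i ∧ #{x ∈ B | x.isRight = true} = i := by
  simp [funext_iff, colorCount, Sum.isLeft_eq_false, and_comm]

lemma colorCount_isLeft_univ {n : ℕ} :
    colorCount Sum.isLeft (univ : Finset (Fin n ⊕ Fin n)) = Function.const Bool n := by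
  rw [colorCount_isLeft_eq_const_iff]
  simp only [card_filter, Fintype.sum_sum_type]
  simp

lemma colorType_isLeft_eq_balancedType_iff {n : ℕ} {m : ℕ → ℕ}
    {P : Finpartition (univ : Finset (Fin n ⊕ Fin n))} :
    colorType Sum.isLeft P = balancedType Bool (Icc 1 n) m ↔
      (∀ B ∈ P.parts, #{x ∈ B | x.isLeft = true} = #{x ∈ B | x.isRight = true}) ∧
        ∀ i ∈ Icc 1 n, #{B ∈ P.parts | #{x ∈ B | x.isLeft = true} = i} = m i := by
  have balanced_iff (B) (hB : B ∈ P.parts) :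
      (∃ i ∈ Icc 1 n, colorCount Sum.isLeft B = Function.const Bool i) ↔
        #{x ∈ B | x.isLeft = true} = #{x ∈ B | x.isRight = true} := by
    constructor
    · rintro ⟨i, -, hi⟩
      obtain ⟨left_eq, right_eq⟩ := colorCount_isLeft_eq_const_iff.1 hi
      rw [left_eq, right_eq]
    · intro h
      have hi := colorCount_isLeft_eq_const_iff.2 ⟨rfl, h.symm⟩
      have count_mem_Icc := mem_Icc_of_colorCount_eq_const (P.nonempty_of_mem_parts hB) hi true
      rw [colorCount_isLeft_univ] at count_mem_Icc
      exact ⟨_, count_mem_Icc, hi⟩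
  rw [colorType_eq_balancedType_iff, forall₂_congr balanced_iff]
  refine and_congr_right fun balanced => forall₂_congr fun i _ => ?_
  have filter_eq : {B ∈ P.parts | colorCount Sum.isLeft B = Function.const Bool i} =
      {B ∈ P.parts | #{x ∈ B | x.isLeft = true} = i} :=
    filter_congr fun B hB => by rw [colorCount_isLeft_eq_const_iff, ← balanced B hB, and_self]
  rw [filter_eq]

end Sum

/-- Proposition `comb`(c) of Kudryavtseva–Mazorchuk: the number of elements of `IT_n`
of type `(m_1, …, m_n)` (where `Σ i·m_i = n`), i.e. of partitions of `Fin n ⊕ Fin n`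
each of whose blocks `B` satisfies `|B ∩ inl| = |B ∩ inr|` and such that for each
`i ∈ {1, …, n}` exactly `m_i` blocks have `|B ∩ inl| = i`, equals
`(n!)² / Π_{i=1}^n (m_i! (i!)^{2 m_i})`. -/
theorem card_IT_type (n : ℕ) (m : ℕ → ℕ) (hm : ∑ i ∈ Finset.Icc 1 n, i * m i = n) :
    Nat.card {P : Finpartition (Finset.univ : Finset (Fin n ⊕ Fin n)) |
        (∀ B ∈ P.parts,
          (B.filter fun x => x.isLeft = true).card = (B.filter fun x => x.isRight = true).card) ∧
        (∀ i ∈ Finset.Icc 1 n,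
          (P.parts.filter fun B => (B.filter fun x => x.isLeft = true).card = i).card = m i)} =
      n.factorial ^ 2 /
        ∏ i ∈ Finset.Icc 1 n, ((m i).factorial * i.factorial ^ (2 * m i)) := by
  have count := card_IT_type_general (c := Sum.isLeft) (T := balancedType Bool (Icc 1 n) m)
    (zero_notMem_balancedType (by simp)) (by rw [sum_balancedType, hm, colorCount_isLeft_univ])
  simp only [colorType_isLeft_eq_balancedType_iff, prod_count_balancedType, prod_map_balancedType,
    colorCount_isLeft_univ, Function.const_apply, prod_const, card_univ, Fintype.card_bool,
    ← pow_mul, ← prod_mul_distrib] at count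
  exact Nat.eq_div_of_mul_eq_left (prod_ne_zero_iff.2 fun i _ => by positivity) count
end

section
/- Let k, m, t be non-negative integers with 2k + 2m + t ≤ n. The number of partitions of Fin n ⊕ Fin n in which every block has cardinality 1 or 2, with exactly k+m blocks consisting of two left points, exactly k blocks consisting of two right points, and exactly t singleton blocks consisting of one left point, equals the number of such partitions with exactly k blocks of two left points, k+m blocks of two right points, and t singleton blocks of one right point, and both numbers equal (n!)² / (k!·2^k·(t+2m)!·(k+m)!·2^{k+m}·t!·(n−2k−2m−t)!) (an exact natural-number division). -/
/-!
Record each block of a partition of `α ⊕ β` by its bidegree, the numbers of its left and right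
points. Removing a marked block of bidegree `d` from a partition and summing over the possible
marked blocks gives, by induction, the number of partitions with a prescribed multiset `M` of
bidegrees: it is `|α|! |β|!` divided by the order of the stabilizer of one such partition in `Sym α
× Sym β`, which permutes points inside blocks and permutes blocks of equal bidegree. In the partial
Brauer monoid the possible bidegrees are `(2, 0)`, `(0, 2)`, `(1, 0)`, `(0, 1)` and `(1, 1)`, and
counting left and right points shows that the brackets together with the left (or the right)
singletons already determine the whole multiset.
-/

open Finset
open scoped Nat

namespace PartialBrauer

section Avoid

variable {α : Type*} [GeneralizedBooleanAlgebra α] [DecidableEq α] {a b : α}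

lemma parts_avoid_of_mem (P : Finpartition a) (hb : b ∈ P.parts) :
    (P.avoid b).parts = P.parts.erase b := by
  have sdiff_eq : ∀ c ∈ P.parts, c ≠ b → c \ b = c := fun c hc hcb =>
    (P.disjoint hc hb hcb).sdiff_eq_left
  ext c
  rw [Finpartition.mem_avoid, mem_erase]
  constructor
  · rintro ⟨d, hd, hdb, rfl⟩
    have hne : d ≠ b := fun h => hdb h.le
    rw [sdiff_eq d hd hne]
    exact ⟨hne, hd⟩
  · rintro ⟨hne, hc⟩
    refine ⟨c, hc, fun hcb => P.ne_bot hc ?_, sdiff_eq c hc hne⟩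
    exact (P.disjoint hc hb hne).eq_bot_of_le hcb

end Avoid

section BlockTypes

variable {α ι : Type*} [DecidableEq α] {s B : Finset α}

/-- The multiset of types of the blocks of a partition, where `τ` assigns a type to each block. -/
def blockTypes (τ : Finset α → ι) (P : Finpartition s) : Multiset ι :=
  P.parts.val.map τ

lemma blockTypes_eq_cons_avoid (τ : Finset α → ι) (P : Finpartition s) (hB : B ∈ P.parts) :
    blockTypes τ P = τ B ::ₘ blockTypes τ (P.avoid B) := by
  rw [blockTypes, blockTypes, parts_avoid_of_mem P hB, erase_val, ← Multiset.map_cons,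
    Multiset.cons_erase hB]

variable [DecidableEq ι]

lemma count_blockTypes (τ : Finset α → ι) (P : Finpartition s) (i : ι) :
    (blockTypes τ P).count i = #{B ∈ P.parts | τ B = i} := by
  simp only [blockTypes, Multiset.count_map, eq_comm (a := i)]
  rfl

/-- The partitions of `s` whose multiset of block types is `M`. -/
def partitionsOfType (τ : Finset α → ι) (s : Finset α) (M : Multiset ι) :
    Finset (Finpartition s) :=
  {P | blockTypes τ P = M}

lemma mem_partitionsOfType {τ : Finset α → ι} {M : Multiset ι} {P : Finpartition s} :
    P ∈ partitionsOfType τ s M ↔ blockTypes τ P = M := by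
  simp [partitionsOfType]

lemma card_partitionsOfType_with_part (τ : Finset α → ι) (M : Multiset ι) (hBs : B ⊆ s)
    (hB : B ≠ ∅) :
    #{P ∈ partitionsOfType τ s (τ B ::ₘ M) | B ∈ P.parts} = #(partitionsOfType τ (s \ B) M) := by
  let adjoin (Q : Finpartition (s \ B)) : Finpartition s :=
    Q.extend hB sdiff_disjoint (sdiff_union_of_subset hBs)
  have mem_adjoin (Q : Finpartition (s \ B)) : B ∈ (adjoin Q).parts := mem_insert_self _ _
  have avoid_adjoin (Q : Finpartition (s \ B)) : (adjoin Q).avoid B = Q := by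
    have hBQ : B ∉ Q.parts := fun h => hB (sdiff_disjoint.symm.eq_bot_of_le (Q.le h))
    ext1
    rw [parts_avoid_of_mem _ (mem_adjoin Q)]
    exact erase_insert hBQ
  refine card_nbij' (fun P => P.avoid B) adjoin ?_ ?_ ?_ ?_
  · intro P hP
    simp only [mem_coe, mem_filter, mem_partitionsOfType] at hP ⊢
    rw [blockTypes_eq_cons_avoid τ P hP.2] at hP
    exact (Multiset.cons_inj_right _).1 hP.1
  · intro Q hQ
    simp only [mem_coe, mem_filter, mem_partitionsOfType] at hQ ⊢
    rw [blockTypes_eq_cons_avoid τ _ (mem_adjoin Q), avoid_adjoin, hQ]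
    exact ⟨rfl, mem_adjoin Q⟩
  · intro P hP
    simp only [mem_coe, mem_filter] at hP
    ext1
    change insert B (P.avoid B).parts = P.parts
    rw [parts_avoid_of_mem P hP.2, insert_erase hP.2]
  · exact fun Q _ => avoid_adjoin Q

/-- Double counting of the pairs `(P, B)` where `B` is a block of `P` of type `i`. -/
lemma card_partitionsOfType_cons_mul (τ : Finset α → ι) (s : Finset α) (M : Multiset ι) {i : ι}
    (hi : τ ∅ ≠ i) :
    #(partitionsOfType τ s (i ::ₘ M)) * (M.count i + 1) =
      ∑ B ∈ s.powerset with τ B = i, #(partitionsOfType τ (s \ B) M) := by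
  have blocks_of_type_i : ∀ P ∈ partitionsOfType τ s (i ::ₘ M),
      #{B ∈ {B ∈ s.powerset | τ B = i} | B ∈ P.parts} = M.count i + 1 := by
    intro P hP
    rw [← Multiset.count_cons_self, ← mem_partitionsOfType.1 hP, count_blockTypes]
    congr 1
    ext B
    simp only [mem_filter, mem_powerset]
    exact ⟨fun h => ⟨h.2, h.1.2⟩, fun h => ⟨⟨P.le h.1, h.2⟩, h.1⟩⟩
  have partitions_with_block : ∀ B ∈ {B ∈ s.powerset | τ B = i},
      #{P ∈ partitionsOfType τ s (i ::ₘ M) | B ∈ P.parts} =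
        #(partitionsOfType τ (s \ B) M) := by
    intro B hB
    obtain ⟨hBs, rfl⟩ := mem_filter.1 hB
    exact card_partitionsOfType_with_part τ M (mem_powerset.1 hBs) fun h => hi (h ▸ rfl)
  rw [← sum_congr rfl partitions_with_block, ← smul_eq_mul, ← sum_const,
    ← sum_congr rfl blocks_of_type_i]
  exact sum_card_bipartiteAbove_eq_sum_card_bipartiteBelow fun (P : Finpartition s) B => B ∈ P.parts

end BlockTypes

section Bidegree

variable {α β : Type*}

/-- The numbers of left and of right points of a finite subset of `α ⊕ β`. -/
def bidegree (s : Finset (α ⊕ β)) : ℕ × ℕ :=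
  (#s.toLeft, #s.toRight)

lemma bidegree_fst_add_snd (s : Finset (α ⊕ β)) : (bidegree s).1 + (bidegree s).2 = #s :=
  card_toLeft_add_card_toRight

lemma bidegree_eq_zero {s : Finset (α ⊕ β)} : bidegree s = 0 ↔ s = ∅ := by
  rw [← card_eq_zero, ← bidegree_fst_add_snd, Nat.add_eq_zero_iff, Prod.ext_iff]
  rfl

lemma bidegree_eq_sum (s : Finset (α ⊕ β)) :
    bidegree s = ∑ x ∈ s, Sum.elim (fun _ => (1, 0)) (fun _ => (0, 1)) x := by
  rw [← toLeft_disjSum_toRight (u := s), sum_disjSum]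
  simp [bidegree]

lemma bidegree_eq_left_iff {s : Finset (α ⊕ β)} {j : ℕ} :
    bidegree s = (j, 0) ↔ #s = j ∧ ∀ x ∈ s, x.isLeft = true := by
  have no_right : #s.toRight = 0 ↔ ∀ x ∈ s, x.isLeft = true := by
    simp [eq_empty_iff_forall_notMem]
  rw [← no_right, ← bidegree_fst_add_snd]
  simp only [bidegree, Prod.mk.injEq]
  omega

lemma bidegree_eq_right_iff {s : Finset (α ⊕ β)} {j : ℕ} :
    bidegree s = (0, j) ↔ #s = j ∧ ∀ x ∈ s, x.isRight = true := by
  have no_left : #s.toLeft = 0 ↔ ∀ x ∈ s, x.isRight = true := by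
    simp [eq_empty_iff_forall_notMem]
  rw [← no_left, ← bidegree_fst_add_snd]
  simp only [bidegree, Prod.mk.injEq]
  omega

/-- The number of permutations of a set of bidegree `d` preserving the two sides. -/
def bifactorial (d : ℕ × ℕ) : ℕ :=
  d.1 ! * d.2 !

lemma card_powerset_bidegree (s : Finset (α ⊕ β)) (d : ℕ × ℕ) :
    #{B ∈ s.powerset | bidegree B = d} = (#s.toLeft).choose d.1 * (#s.toRight).choose d.2 := by
  rw [← card_powersetCard, ← card_powersetCard, ← card_product]
  refine card_nbij' (fun B => (B.toLeft, B.toRight)) (fun p => p.1.disjSum p.2) ?_ ?_ ?_ ?_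
  · intro B hB
    obtain ⟨hBs, rfl⟩ := mem_filter.1 hB
    rw [mem_powerset] at hBs
    simp [bidegree, toLeft_subset_toLeft hBs, toRight_subset_toRight hBs]
  · intro p hp
    simp only [coe_product, Set.mem_prod, mem_coe, mem_powersetCard] at hp
    rw [mem_coe, mem_filter, mem_powerset, disjSum_subset]
    exact ⟨⟨hp.1.1, hp.2.1⟩, by simp [bidegree, hp]⟩
  · exact fun B _ => toLeft_disjSum_toRight
  · exact fun p _ => Prod.ext toLeft_disjSum toRight_disjSum

lemma card_powerset_bidegree_mul_bifactorial {s : Finset (α ⊕ β)} {d e : ℕ × ℕ}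
    (hs : bidegree s = d + e) :
    #{B ∈ s.powerset | bidegree B = d} * bifactorial d * bifactorial e =
      bifactorial (bidegree s) := by
  have hleft : #s.toLeft = d.1 + e.1 := congrArg Prod.fst hs
  have hright : #s.toRight = d.2 + e.2 := congrArg Prod.snd hs
  rw [card_powerset_bidegree, hs, hleft, hright]
  simp only [bifactorial, Prod.fst_add, Prod.snd_add]
  rw [← Nat.add_choose_mul_factorial_mul_factorial d.1 e.1,
    ← Nat.add_choose_mul_factorial_mul_factorial d.2 e.2, Nat.choose_symm_add,
    Nat.choose_symm_add]
  ring

variable [DecidableEq α] [DecidableEq β]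

lemma bidegree_sdiff_add {s B : Finset (α ⊕ β)} (hB : B ⊆ s) :
    bidegree (s \ B) + bidegree B = bidegree s := by
  simp only [bidegree_eq_sum]
  exact sum_sdiff hB

lemma sum_blockTypes_bidegree {s : Finset (α ⊕ β)} (P : Finpartition s) :
    (blockTypes bidegree P).sum = bidegree s := by
  calc (blockTypes bidegree P).sum = ∑ B ∈ P.parts, bidegree B := rfl
    _ = bidegree (P.parts.biUnion id) := by
      simp only [bidegree_eq_sum]
      exact (sum_biUnion P.disjoint).symm
    _ = bidegree s := by rw [P.biUnion_parts]

end Bidegree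

section Count

/-- The order of the stabilizer, among the permutations preserving the two sides, of a partition
with multiset of block bidegrees `M`. -/
def stabilizerOrder (M : Multiset (ℕ × ℕ)) : ℕ :=
  (M.map bifactorial).prod * ∏ d ∈ M.toFinset, (M.count d)!

lemma stabilizerOrder_eq_of_subset {M : Multiset (ℕ × ℕ)} {I : Finset (ℕ × ℕ)}
    (hI : M.toFinset ⊆ I) :
    stabilizerOrder M = (M.map bifactorial).prod * ∏ d ∈ I, (M.count d)! := by
  rw [stabilizerOrder, prod_subset hI]
  intro d _ hd
  rw [Multiset.count_eq_zero.2 (mt Multiset.mem_toFinset.2 hd), Nat.factorial_zero]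

lemma stabilizerOrder_cons (d : ℕ × ℕ) (M : Multiset (ℕ × ℕ)) :
    stabilizerOrder (d ::ₘ M) = (M.count d + 1) * bifactorial d * stabilizerOrder M := by
  have hd : d ∈ (d ::ₘ M).toFinset := by simp
  have hM : M.toFinset ⊆ (d ::ₘ M).toFinset := by simp
  have count_ne : ∏ e ∈ (d ::ₘ M).toFinset.erase d, ((d ::ₘ M).count e)! =
      ∏ e ∈ (d ::ₘ M).toFinset.erase d, (M.count e)! :=
    prod_congr rfl fun e he => by rw [Multiset.count_cons_of_ne (ne_of_mem_erase he)]
  rw [stabilizerOrder, stabilizerOrder_eq_of_subset hM, ← mul_prod_erase _ _ hd,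
    ← mul_prod_erase _ (fun e => (M.count e)!) hd, count_ne, Multiset.count_cons_self,
    Nat.factorial_succ, Multiset.map_cons, Multiset.prod_cons]
  ring

variable {α β : Type*} [DecidableEq α] [DecidableEq β]

theorem card_partitionsOfType_mul_stabilizerOrder {M : Multiset (ℕ × ℕ)} (hM : 0 ∉ M)
    (s : Finset (α ⊕ β)) (hs : bidegree s = M.sum) :
    #(partitionsOfType bidegree s M) * stabilizerOrder M = bifactorial (bidegree s) := by
  induction M using Multiset.induction generalizing s with
  | empty =>
    obtain rfl : s = ∅ := bidegree_eq_zero.1 hs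
    rfl
  | cons d M ih =>
    rw [Multiset.mem_cons, not_or] at hM
    rw [Multiset.sum_cons] at hs
    have hd : bidegree (∅ : Finset (α ⊕ β)) ≠ d := hM.1
    have remaining : ∀ B ∈ {B ∈ s.powerset | bidegree B = d},
        #(partitionsOfType bidegree (s \ B) M) * stabilizerOrder M = bifactorial M.sum := by
      intro B hB
      obtain ⟨hBs, rfl⟩ := mem_filter.1 hB
      have hsB : bidegree (s \ B) = M.sum := by
        rw [← bidegree_sdiff_add (mem_powerset.1 hBs), add_comm] at hs
        exact add_left_cancel hs
      rw [ih hM.2 _ hsB, hsB]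
    calc #(partitionsOfType bidegree s (d ::ₘ M)) * stabilizerOrder (d ::ₘ M)
        = #(partitionsOfType bidegree s (d ::ₘ M)) * (M.count d + 1) *
            stabilizerOrder M * bifactorial d := by rw [stabilizerOrder_cons]; ring
      _ = #{B ∈ s.powerset | bidegree B = d} * bifactorial M.sum * bifactorial d := by
        rw [card_partitionsOfType_cons_mul _ _ _ hd, sum_mul, sum_congr rfl remaining, sum_const,
          smul_eq_mul]
      _ = bifactorial (bidegree s) := by
        rw [← card_powerset_bidegree_mul_bifactorial hs]; ring

end Count

section Brauer

variable {a b p q l : ℕ}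

/-- The block bidegrees of an element of a partial Brauer monoid with `a` left brackets, `b` right
brackets, `p` left points, `q` right points and `l` lines. -/
def brauerBidegrees (a b p q l : ℕ) : Multiset (ℕ × ℕ) :=
  .replicate a (2, 0) + .replicate b (0, 2) + .replicate p (1, 0) + .replicate q (0, 1) +
    .replicate l (1, 1)

lemma sum_brauerBidegrees (a b p q l : ℕ) :
    (brauerBidegrees a b p q l).sum = (2 * a + p + l, 2 * b + q + l) := by
  simp [brauerBidegrees, Multiset.sum_replicate, mul_comm 2]

lemma count_brauerBidegrees (a b p q l : ℕ) (d : ℕ × ℕ) :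
    (brauerBidegrees a b p q l).count d =
      (if d = (2, 0) then a else 0) + (if d = (0, 2) then b else 0) +
        (if d = (1, 0) then p else 0) + (if d = (0, 1) then q else 0) +
          (if d = (1, 1) then l else 0) := by
  simp [brauerBidegrees, Multiset.count_replicate, eq_comm (a := d)]

lemma mem_of_fst_add_snd_eq_one_or_two {d : ℕ × ℕ} (hd : d.1 + d.2 = 1 ∨ d.1 + d.2 = 2) :
    d ∈ ({(2, 0), (0, 2), (1, 0), (0, 1), (1, 1)} : Finset (ℕ × ℕ)) := by
  obtain ⟨i, j⟩ := d
  simp only [mem_insert, mem_singleton, Prod.mk.injEq]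
  omega

lemma fst_add_snd_of_mem_brauerBidegrees {d : ℕ × ℕ} (hd : d ∈ brauerBidegrees a b p q l) :
    d.1 + d.2 = 1 ∨ d.1 + d.2 = 2 := by
  simp only [brauerBidegrees, Multiset.mem_add, Multiset.mem_replicate] at hd
  rcases hd with (((⟨-, rfl⟩ | ⟨-, rfl⟩) | ⟨-, rfl⟩) | ⟨-, rfl⟩) | ⟨-, rfl⟩ <;> simp

lemma eq_brauerBidegrees_count {M : Multiset (ℕ × ℕ)}
    (hM : ∀ d ∈ M, d.1 + d.2 = 1 ∨ d.1 + d.2 = 2) :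
    M = brauerBidegrees (M.count (2, 0)) (M.count (0, 2)) (M.count (1, 0)) (M.count (0, 1))
      (M.count (1, 1)) := by
  ext d
  by_cases hd : d.1 + d.2 = 1 ∨ d.1 + d.2 = 2
  · have d_cases := mem_of_fst_add_snd_eq_one_or_two hd
    simp only [mem_insert, mem_singleton] at d_cases
    rcases d_cases with rfl | rfl | rfl | rfl | rfl <;> simp [count_brauerBidegrees]
  · rw [Multiset.count_eq_zero.2 (mt (hM d) hd),
      Multiset.count_eq_zero.2 (mt fst_add_snd_of_mem_brauerBidegrees hd)]

lemma stabilizerOrder_brauerBidegrees (a b p q l : ℕ) :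
    stabilizerOrder (brauerBidegrees a b p q l) =
      a ! * 2 ^ a * b ! * 2 ^ b * p ! * q ! * l ! := by
  have support : (brauerBidegrees a b p q l).toFinset ⊆
      {(2, 0), (0, 2), (1, 0), (0, 1), (1, 1)} := by
    intro d hd
    rw [Multiset.mem_toFinset] at hd
    exact mem_of_fst_add_snd_eq_one_or_two (fst_add_snd_of_mem_brauerBidegrees hd)
  have inside_blocks : ((brauerBidegrees a b p q l).map bifactorial).prod = 2 ^ a * 2 ^ b := by
    simp [brauerBidegrees, bifactorial]
  have between_blocks : ∏ d ∈ {(2, 0), (0, 2), (1, 0), (0, 1), (1, 1)},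
      ((brauerBidegrees a b p q l).count d)! = a ! * b ! * p ! * q ! * l ! := by
    simp [count_brauerBidegrees, mul_assoc]
  rw [stabilizerOrder_eq_of_subset support, inside_blocks, between_blocks]
  ring

variable {α β : Type*} [DecidableEq α] [DecidableEq β]

theorem card_partitionsOfType_brauerBidegrees {s : Finset (α ⊕ β)}
    (hs : bidegree s = (2 * a + p + l, 2 * b + q + l)) :
    #(partitionsOfType bidegree s (brauerBidegrees a b p q l)) =
      (#s.toLeft)! * (#s.toRight)! / (a ! * 2 ^ a * b ! * 2 ^ b * p ! * q ! * l !) := by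
  have h_zero : 0 ∉ brauerBidegrees a b p q l := fun h => by
    simpa using fst_add_snd_of_mem_brauerBidegrees h
  have h_count := card_partitionsOfType_mul_stabilizerOrder h_zero s
    (hs.trans (sum_brauerBidegrees a b p q l).symm)
  rw [stabilizerOrder_brauerBidegrees] at h_count
  exact Nat.eq_div_of_mul_eq_left (by positivity) h_count

section Finpartition

variable {s : Finset (α ⊕ β)} (P : Finpartition s)

lemma card_left_blocks (j : ℕ)
    [DecidablePred fun B : Finset (α ⊕ β) => #B = j ∧ ∀ x ∈ B, x.isLeft = true] :
    #{B ∈ P.parts | #B = j ∧ ∀ x ∈ B, x.isLeft = true} = (blockTypes bidegree P).count (j, 0) := by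
  simp only [count_blockTypes, bidegree_eq_left_iff]

lemma card_right_blocks (j : ℕ)
    [DecidablePred fun B : Finset (α ⊕ β) => #B = j ∧ ∀ x ∈ B, x.isRight = true] :
    #{B ∈ P.parts | #B = j ∧ ∀ x ∈ B, x.isRight = true} = (blockTypes bidegree P).count (0, j) := by
  simp only [count_blockTypes, bidegree_eq_right_iff]

lemma card_eq_one_or_two_iff_blockTypes :
    (∀ B ∈ P.parts, #B = 1 ∨ #B = 2) ↔
      ∀ d ∈ blockTypes bidegree P, d.1 + d.2 = 1 ∨ d.1 + d.2 = 2 := by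
  simp [blockTypes, bidegree_fst_add_snd]

variable {P}

lemma bidegree_eq_of_card_eq_one_or_two (hP : ∀ B ∈ P.parts, #B = 1 ∨ #B = 2) :
    let c := (blockTypes bidegree P).count
    bidegree s = (2 * c (2, 0) + c (1, 0) + c (1, 1), 2 * c (0, 2) + c (0, 1) + c (1, 1)) := by
  intro c
  rw [← sum_blockTypes_bidegree P, ← sum_brauerBidegrees,
    ← eq_brauerBidegrees_count ((card_eq_one_or_two_iff_blockTypes P).1 hP)]

lemma blockTypes_eq_brauerBidegrees_iff :
    blockTypes bidegree P = brauerBidegrees a b p q l ↔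
      (∀ B ∈ P.parts, #B = 1 ∨ #B = 2) ∧
        (blockTypes bidegree P).count (2, 0) = a ∧ (blockTypes bidegree P).count (0, 2) = b ∧
          (blockTypes bidegree P).count (1, 0) = p ∧ (blockTypes bidegree P).count (0, 1) = q ∧
            (blockTypes bidegree P).count (1, 1) = l := by
  constructor
  · intro h
    rw [card_eq_one_or_two_iff_blockTypes, h]
    exact ⟨fun d => fst_add_snd_of_mem_brauerBidegrees, by simp [count_brauerBidegrees]⟩
  · rintro ⟨hP, rfl, rfl, rfl, rfl, rfl⟩
    exact eq_brauerBidegrees_count ((card_eq_one_or_two_iff_blockTypes P).1 hP)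

lemma blockTypes_eq_brauerBidegrees_iff_left
    (hs : bidegree s = (2 * a + p + l, 2 * b + q + l)) :
    blockTypes bidegree P = brauerBidegrees a b p q l ↔
      (∀ B ∈ P.parts, #B = 1 ∨ #B = 2) ∧
        (blockTypes bidegree P).count (2, 0) = a ∧ (blockTypes bidegree P).count (0, 2) = b ∧
          (blockTypes bidegree P).count (1, 0) = p := by
  rw [blockTypes_eq_brauerBidegrees_iff]
  refine and_congr_right fun hP => ?_
  have points := bidegree_eq_of_card_eq_one_or_two hP
  simp only [hs, Prod.mk.injEq] at points
  omega

lemma blockTypes_eq_brauerBidegrees_iff_right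
    (hs : bidegree s = (2 * a + p + l, 2 * b + q + l)) :
    blockTypes bidegree P = brauerBidegrees a b p q l ↔
      (∀ B ∈ P.parts, #B = 1 ∨ #B = 2) ∧
        (blockTypes bidegree P).count (2, 0) = a ∧ (blockTypes bidegree P).count (0, 2) = b ∧
          (blockTypes bidegree P).count (0, 1) = q := by
  rw [blockTypes_eq_brauerBidegrees_iff]
  refine and_congr_right fun hP => ?_
  have points := bidegree_eq_of_card_eq_one_or_two hP
  simp only [hs, Prod.mk.injEq] at points
  omega

end Finpartition

end Brauer

end PartialBrauer

open PartialBrauer in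
theorem card_PB_type_general {α β : Type*} [Fintype α] [Fintype β] [DecidableEq α] [DecidableEq β]
    {a b p q l : ℕ} (hα : Fintype.card α = 2 * a + p + l) (hβ : Fintype.card β = 2 * b + q + l) :
    Nat.card {P : Finpartition (univ : Finset (α ⊕ β)) |
        (∀ B ∈ P.parts, #B = 1 ∨ #B = 2) ∧
        #{B ∈ P.parts | #B = 2 ∧ ∀ x ∈ B, x.isLeft = true} = a ∧
        #{B ∈ P.parts | #B = 2 ∧ ∀ x ∈ B, x.isRight = true} = b ∧
        #{B ∈ P.parts | #B = 1 ∧ ∀ x ∈ B, x.isLeft = true} = p} =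
      (Fintype.card α)! * (Fintype.card β)! /
        (a ! * 2 ^ a * b ! * 2 ^ b * p ! * q ! * l !) ∧
    Nat.card {P : Finpartition (univ : Finset (α ⊕ β)) |
        (∀ B ∈ P.parts, #B = 1 ∨ #B = 2) ∧
        #{B ∈ P.parts | #B = 2 ∧ ∀ x ∈ B, x.isLeft = true} = a ∧
        #{B ∈ P.parts | #B = 2 ∧ ∀ x ∈ B, x.isRight = true} = b ∧
        #{B ∈ P.parts | #B = 1 ∧ ∀ x ∈ B, x.isRight = true} = q} =
      (Fintype.card α)! * (Fintype.card β)! /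
        (a ! * 2 ^ a * b ! * 2 ^ b * p ! * q ! * l !) := by
  have hs : bidegree (univ : Finset (α ⊕ β)) = (2 * a + p + l, 2 * b + q + l) := by
    simp [bidegree, hα, hβ]
  have h_card := card_partitionsOfType_brauerBidegrees hs
  simp only [toLeft_univ, toRight_univ, card_univ] at h_card
  simp only [card_left_blocks, card_right_blocks, ← blockTypes_eq_brauerBidegrees_iff_left hs,
    ← blockTypes_eq_brauerBidegrees_iff_right hs, ← mem_partitionsOfType, ← h_card]
  exact ⟨Nat.card_eq_finsetCard _, Nat.card_eq_finsetCard _⟩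

/-- Proposition `comb`(d) of Kudryavtseva–Mazorchuk: for non-negative integers `k, m, t`
with `2k + 2m + t ≤ n`, the number of elements of the partial Brauer monoid `P𝔅_n`
(partitions of `Fin n ⊕ Fin n` into blocks of size `1` or `2`) of type `(k, m, 0, t)`
— with exactly `k + m` blocks of two left points, `k` blocks of two right points and
`t` singleton blocks of a left point — equals the number of those of type `(k, 0, m, t)`
— with exactly `k` blocks of two left points, `k + m` blocks of two right points and
`t` singleton blocks of a right point — and both numbers equal
`(n!)² / (k! 2^k (t+2m)! (k+m)! 2^{k+m} t! (n-2k-2m-t)!)`. -/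
theorem card_PB_type (n k m t : ℕ) (h : 2 * k + 2 * m + t ≤ n) :
    Nat.card {P : Finpartition (Finset.univ : Finset (Fin n ⊕ Fin n)) |
        (∀ B ∈ P.parts, B.card = 1 ∨ B.card = 2) ∧
        (P.parts.filter fun B => B.card = 2 ∧ ∀ x ∈ B, x.isLeft = true).card = k + m ∧
        (P.parts.filter fun B => B.card = 2 ∧ ∀ x ∈ B, x.isRight = true).card = k ∧
        (P.parts.filter fun B => B.card = 1 ∧ ∀ x ∈ B, x.isLeft = true).card = t} =
      Nat.card {P : Finpartition (Finset.univ : Finset (Fin n ⊕ Fin n)) |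
        (∀ B ∈ P.parts, B.card = 1 ∨ B.card = 2) ∧
        (P.parts.filter fun B => B.card = 2 ∧ ∀ x ∈ B, x.isLeft = true).card = k ∧
        (P.parts.filter fun B => B.card = 2 ∧ ∀ x ∈ B, x.isRight = true).card = k + m ∧
        (P.parts.filter fun B => B.card = 1 ∧ ∀ x ∈ B, x.isRight = true).card = t} ∧
    Nat.card {P : Finpartition (Finset.univ : Finset (Fin n ⊕ Fin n)) |
        (∀ B ∈ P.parts, B.card = 1 ∨ B.card = 2) ∧
        (P.parts.filter fun B => B.card = 2 ∧ ∀ x ∈ B, x.isLeft = true).card = k + m ∧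
        (P.parts.filter fun B => B.card = 2 ∧ ∀ x ∈ B, x.isRight = true).card = k ∧
        (P.parts.filter fun B => B.card = 1 ∧ ∀ x ∈ B, x.isLeft = true).card = t} =
      n.factorial ^ 2 /
        (k.factorial * 2 ^ k * (t + 2 * m).factorial * (k + m).factorial * 2 ^ (k + m) *
          t.factorial * (n - 2 * k - 2 * m - t).factorial) := by
  obtain ⟨l, rfl⟩ := Nat.exists_eq_add_of_le h
  have hl : 2 * k + 2 * m + t + l - 2 * k - 2 * m - t = l := by omega
  set n := 2 * k + 2 * m + t + l
  have hkm : Fintype.card (Fin n) = 2 * (k + m) + t + l := by rw [Fintype.card_fin]; ring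
  have hk : Fintype.card (Fin n) = 2 * k + (t + 2 * m) + l := by rw [Fintype.card_fin]; ring
  rw [(card_PB_type_general hkm hk).1, (card_PB_type_general hk hkm).2, hl, Fintype.card_fin, ← sq]
  constructor <;> congr 1 <;> ring
end
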